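/- Let n ≥ 2, 0 < p, q ≤ ∞ and s ∈ ℝ with s + 1 − 1/p < 0. For f ∈ 𝒮′(ℝ^{n−1}) define f⊗δ₀ ∈ 𝒮′(ℝⁿ) by ⟨f⊗δ₀, φ⟩ = ⟨f, φ(·,0)⟩ for φ ∈ 𝒮(ℝⁿ). Then: (1) there exists c = c(n,s,p,q) such that for every f ∈ B^{s+1−1/p}_{p,q}(ℝ^{n−1}): ‖f⊗δ₀‖_{B^s_{p,q}(ℝⁿ)} ≤ c ‖δ₀‖_{B^{1/p−1}_{p,∞}(ℝ)} ‖f‖_{B^{s+1−1/p}_{p,q}(ℝ^{n−1})}, where δ₀ ∈ 𝒮′(ℝ) is the Dirac distribution at 0 and ‖δ₀‖_{B^{1/p−1}_{p,∞}(ℝ)} < ∞; (2) if moreover p < ∞, there exists c = c(n,s,p,q) such that for every f ∈ B^{s+1−1/p}_{p,p}(ℝ^{n−1}): ‖f⊗δ₀‖_{F^s_{p,q}(ℝⁿ)} ≤ c ‖f‖_{B^{s+1−1/p}_{p,p}(ℝ^{n−1})}. -/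

import Mathlib

/-! Write `F = f ⊗ δ₀` and let `K_j = ℱ⁻¹Φ_j` be the Littlewood–Paley kernels on `ℝ^{m+1}`. The piece
`F_j(x) = ⟨f, K_j(x - (·, 0))⟩` tests `f` against a slice of `K_j` (`LPfun_eq`, `LPfun_tens`). The
Fourier transform of that slice lives in `|ξ'| ≤ (13/10) 2^j`, where `Ψ(2^{-j-1}|·|) = 1`, so `f` may
be replaced by its low-frequency part `S_j f = ∑_{k ≤ j+1} f_k`, a continuous function:
`F_j(x) = ∫ K_j(x - (y, 0)) S_j f(y) dy` (`slice_int`). Since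
`|K_j(x', t)| ≤ C 2^j (1 + 2^j |t|)^{-M} · 2^{jm} (1 + 2^j |x'|)^{-M}`, Young's inequality gives
`‖F_j(·, t)‖_p ≤ C 2^j (1 + 2^j |t|)^{-M} ‖S_j f‖_p` for `p ≥ 1`. For `p < 1` the integrand is
band-limited to a ball of radius `≲ 2^j`, and the Nikolskii inequality `‖h‖_1 ≤ C 2^{jm(1/p - 1)} ‖h‖_p`
yields the same bound (`slice_nik`, `slice_abstract`, `slice_lt`, `slice_top`).

* Besov case: integrating in `t` gives `‖F_j‖_p ≤ C 2^{j(1 - 1/p)} ‖S_j f‖_p` (`piece_Lp`). As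
  `s + 1 - 1/p < 0`, Hardy's inequality for sequences (`hardy`) controls the weighted `ℓ_q`-norm of
  `‖S_j f‖_p` by the one of `‖f_j‖_p` (`lowP_besov`).
* Triebel–Lizorkin case: for `t ≠ 0` the reciprocals of the weights
  `ρ(2^j t) = |2^j t|^{1/2} + |2^j t|^{-1/2}` decay geometrically away from `2^j ≈ |t|⁻¹`, so that
  `‖a‖_{ℓ_q}^p ≤ K ∑_j ρ(2^j t) |a_j|^p` with `K` independent of `t` (`ellq_le_rho`). The decay of `F_j`
  in the normal direction absorbs `ρ` when one integrates in `t`, whence only the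
  `ℓ_p`-sum of the Besov case is left (`tl_abstract`).

On `ℝ` the pieces of `δ₀` are the kernels `ℱ⁻¹Φ_j`, whose `L_p`-norms are at most a constant times
`2^{j(1 - 1/p)}`. The norm of `δ₀` is therefore finite, and it is nonzero because `Φ_0(0) = 1`; the
factor `‖δ₀‖` in the Besov estimate can thus be absorbed in the constant. -/

open MeasureTheory Filter Complex
open scoped ENNReal NNReal Real BigOperators Topology

noncomputable section

/-- `ℝ^m`, with its (sup-normed) product structure; the Lebesgue measure is the
product measure. -/
abbrev Eu (m : ℕ) : Type := Fin m → ℝ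

/-- Tempered distributions on `ℝ^m`. -/
abbrev TD (m : ℕ) := SchwartzMap (Eu m) ℂ →L[ℂ] ℂ

/-- The dot product `x · ξ = ∑ xᵢ ξᵢ`. -/
def dotp {m : ℕ} (x ξ : Eu m) : ℝ := ∑ i, x i * ξ i

/-- The euclidean norm `|x|`. -/
def eun {m : ℕ} (x : Eu m) : ℝ := Real.sqrt (∑ i, x i ^ 2)

/-- The japanese bracket `⟨ξ⟩ = (1 + |ξ|²)^(1/2)`. -/
def jap {m : ℕ} (ξ : Eu m) : ℝ := Real.sqrt (1 + ∑ i, ξ i ^ 2)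

/-- The Fourier transform `ℱf(ξ) = ∫ e^{-i x·ξ} f(x) dx` (paper convention). -/
def pF {m : ℕ} (f : Eu m → ℂ) (ξ : Eu m) : ℂ :=
  ∫ x : Eu m, Complex.exp (-(Complex.I * (dotp x ξ : ℂ))) * f x

/-- The inverse Fourier transform `(2π)^{-m} ∫ e^{i x·ξ} f(ξ) dξ`. -/
def pFinv {m : ℕ} (f : Eu m → ℂ) (x : Eu m) : ℂ :=
  (((2 * Real.pi) ^ m : ℝ)⁻¹) • ∫ ξ : Eu m, Complex.exp (Complex.I * (dotp x ξ : ℂ)) * f ξ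

/-- One-dimensional Fourier transform. -/
def pF1 (f : ℝ → ℂ) (τ : ℝ) : ℂ :=
  ∫ t : ℝ, Complex.exp (-(Complex.I * ((t * τ : ℝ) : ℂ))) * f t

/-- One-dimensional inverse Fourier transform. -/
def pFinv1 (f : ℝ → ℂ) (t : ℝ) : ℂ :=
  ((2 * Real.pi)⁻¹ : ℝ) • ∫ τ : ℝ, Complex.exp (Complex.I * ((t * τ : ℝ) : ℂ)) * f τ

/-- `ℓ_q`-norm (`0 < q ≤ ∞`) of a sequence of extended nonnegative reals. -/
def ellqNorm (q : ℝ≥0∞) (b : ℕ → ℝ≥0∞) : ℝ≥0∞ :=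
  if q = ∞ then ⨆ j, b j else (∑' j, b j ^ q.toReal) ^ (1 / q.toReal)

/-- The weight `2^{s j}` as an extended nonnegative real. -/
def tw (s : ℝ) (j : ℕ) : ℝ≥0∞ := ENNReal.ofReal ((2 : ℝ) ^ (s * (j : ℝ)))

/-- `1/p ∈ ℝ` for `p ∈ (0,∞]`. -/
def iv (p : ℝ≥0∞) : ℝ := p⁻¹.toReal

/-- An admissible Littlewood–Paley generating function `Ψ`. -/
def GoodPsi (Ψ : ℝ → ℝ) : Prop :=
  ContDiff ℝ (⊤ : ℕ∞) Ψ ∧ (∀ t : ℝ, t ≤ 11 / 10 → Ψ t = 1) ∧ (∀ t : ℝ, 13 / 10 ≤ t → Ψ t = 0)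

/-- The `j`-th Littlewood–Paley symbol `Φ_j(ξ) = Ψ(2^{-j}|ξ|) − Ψ(2^{1-j}|ξ|)` (with
`Ψ_{-1} = 0`). -/
def LPsym (Ψ : ℝ → ℝ) {m : ℕ} (j : ℕ) (ξ : Eu m) : ℝ :=
  Ψ ((2 : ℝ) ^ (-(j : ℝ)) * eun ξ) - (if j = 0 then 0 else Ψ ((2 : ℝ) ^ (1 - (j : ℝ)) * eun ξ))

/-- `Φs` is the Littlewood–Paley partition of unity built from `Ψ`, realised as a family
of Schwartz functions. -/
def IsLP (Ψ : ℝ → ℝ) {m : ℕ} (Φs : ℕ → SchwartzMap (Eu m) ℂ) : Prop :=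
  ∀ j ξ, Φs j ξ = (LPsym Ψ j ξ : ℂ)

/-- The tempered distribution `T` is represented by the function `g`. -/
def Represents {m : ℕ} (T : TD m) (g : Eu m → ℂ) : Prop :=
  ∀ φ : SchwartzMap (Eu m) ℂ, T φ = ∫ x, g x * φ x

/-- `g` is (the continuous function representing) the Littlewood–Paley piece
`ℱ^{-1}(Φ_j ℱu)` of the tempered distribution `u`:  for every Schwartz `φ`, writing
`ψ = ℱ^{-1}φ` and `χ = ℱ(Φ_j ψ)` (as Schwartz functions), one has `⟨u, χ⟩ = ∫ g φ`. -/
def IsLPpiece {m : ℕ} (Φj : SchwartzMap (Eu m) ℂ) (u : TD m) (g : Eu m → ℂ) : Prop :=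
  Continuous g ∧
    ∀ φ ψ χ : SchwartzMap (Eu m) ℂ,
      (∀ x, ψ x = pFinv (fun y => φ y) x) →
      (∀ ξ, χ ξ = pF (fun η => Φj η * ψ η) ξ) →
      u χ = ∫ x, g x * φ x

open Classical in
/-- The Littlewood–Paley piece `ℱ^{-1}(Φ_j ℱu)` of a tempered distribution, as a
function (via choice of the continuous representative). -/
def LPfun {m : ℕ} (Φj : SchwartzMap (Eu m) ℂ) (u : TD m) : Eu m → ℂ :=
  if h : ∃ g, IsLPpiece Φj u g then h.choose else 0

/-- Besov quasi-norm of a sequence of (Littlewood–Paley) functions. -/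
def besovNormSeq {m : ℕ} (s : ℝ) (p q : ℝ≥0∞) (g : ℕ → Eu m → ℂ) : ℝ≥0∞ :=
  ellqNorm q fun j => tw s j * eLpNorm (g j) p volume

/-- Triebel–Lizorkin quasi-norm of a sequence of (Littlewood–Paley) functions. -/
def tlNormSeq {m : ℕ} (s : ℝ) (p q : ℝ≥0∞) (g : ℕ → Eu m → ℂ) : ℝ≥0∞ :=
  (∫⁻ x, (ellqNorm q fun j => tw s j * (‖g j x‖₊ : ℝ≥0∞)) ^ p.toReal ∂volume) ^ (1 / p.toReal)

/-- Besov quasi-norm `‖u‖_{B^s_{p,q}}` of a tempered distribution. -/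
def besovNormD {m : ℕ} (Φs : ℕ → SchwartzMap (Eu m) ℂ) (s : ℝ) (p q : ℝ≥0∞) (u : TD m) :
    ℝ≥0∞ :=
  besovNormSeq s p q fun j => LPfun (Φs j) u

/-- Triebel–Lizorkin quasi-norm `‖u‖_{F^s_{p,q}}` of a tempered distribution. -/
def tlNormD {m : ℕ} (Φs : ℕ → SchwartzMap (Eu m) ℂ) (s : ℝ) (p q : ℝ≥0∞) (u : TD m) :
    ℝ≥0∞ :=
  tlNormSeq s p q fun j => LPfun (Φs j) u

/-- The open upper half-space `ℝ^{m+1}_+ = {x : x_n > 0}`. -/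
def upperH (m : ℕ) : Set (Eu (m + 1)) := {x | 0 < x (Fin.last m)}

/-- `w ∈ 𝒮'(ℝ^{m+1})` agrees with the function `f` on the open half-space `ℝ^{m+1}_+`. -/
def RestrictsTo {m : ℕ} (w : TD (m + 1)) (f : Eu (m + 1) → ℂ) : Prop :=
  ∀ φ : SchwartzMap (Eu (m + 1)) ℂ, HasCompactSupport (φ : Eu (m + 1) → ℂ) →
    tsupport (φ : Eu (m + 1) → ℂ) ⊆ upperH m → w φ = ∫ x, f x * φ x

/-- Two tempered distributions agree on the open upper half-space. -/
def AgreeOnUpper {m : ℕ} (w v : TD (m + 1)) : Prop :=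
  ∀ φ : SchwartzMap (Eu (m + 1)) ℂ, HasCompactSupport (φ : Eu (m + 1) → ℂ) →
    tsupport (φ : Eu (m + 1) → ℂ) ⊆ upperH m → w φ = v φ

/-- `‖f‖_{B^s_{p,q}(ℝ̄^{m+1}_+)}`: infimum of the Besov norms of all distributional
extensions of (the restriction to the half-space of) the function `f`. -/
def bHalfNormF {m : ℕ} (Φs : ℕ → SchwartzMap (Eu (m + 1)) ℂ) (s : ℝ) (p q : ℝ≥0∞)
    (f : Eu (m + 1) → ℂ) : ℝ≥0∞ :=
  ⨅ (w : TD (m + 1)) (_ : RestrictsTo w f), besovNormD Φs s p q w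

/-- `‖f‖_{F^s_{p,q}(ℝ̄^{m+1}_+)}`. -/
def tlHalfNormF {m : ℕ} (Φs : ℕ → SchwartzMap (Eu (m + 1)) ℂ) (s : ℝ) (p q : ℝ≥0∞)
    (f : Eu (m + 1) → ℂ) : ℝ≥0∞ :=
  ⨅ (w : TD (m + 1)) (_ : RestrictsTo w f), tlNormD Φs s p q w

/-- `‖v‖_{B^s_{p,q}(ℝ̄^{m+1}_+)}` for a tempered distribution `v`. -/
def bHalfNormD {m : ℕ} (Φs : ℕ → SchwartzMap (Eu (m + 1)) ℂ) (s : ℝ) (p q : ℝ≥0∞)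
    (v : TD (m + 1)) : ℝ≥0∞ :=
  ⨅ (w : TD (m + 1)) (_ : AgreeOnUpper w v), besovNormD Φs s p q w

/-- `‖v‖_{F^s_{p,q}(ℝ̄^{m+1}_+)}` for a tempered distribution `v`. -/
def tlHalfNormD {m : ℕ} (Φs : ℕ → SchwartzMap (Eu (m + 1)) ℂ) (s : ℝ) (p q : ℝ≥0∞)
    (v : TD (m + 1)) : ℝ≥0∞ :=
  ⨅ (w : TD (m + 1)) (_ : AgreeOnUpper w v), tlNormD Φs s p q w

/-- Partial derivative in the `i`-th coordinate. -/
def cDeriv {k : ℕ} (i : Fin k) (f : Eu k → ℂ) : Eu k → ℂ :=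
  fun x => deriv (fun t => f (Function.update x i t)) (x i)

/-- Iterated partial derivative `∂^α` for a multi-index `α`. -/
def mDeriv {k : ℕ} (α : Fin k → ℕ) (f : Eu k → ℂ) : Eu k → ℂ :=
  (List.finRange k).foldr (fun i g => (cDeriv i)^[α i] g) f

/-- Length `|α| = ∑ αᵢ` of a multi-index. -/
def degS {k : ℕ} (α : Fin k → ℕ) : ℕ := ∑ i, α i

/-- `D^α = (-i)^{|α|} ∂^α`. -/
def mD {k : ℕ} (α : Fin k → ℕ) (f : Eu k → ℂ) : Eu k → ℂ :=
  fun x => (-Complex.I) ^ degS α * mDeriv α f x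

/-- Monomial `x^α`. -/
def monom {k : ℕ} (α : Fin k → ℕ) (x : Eu k) : ℂ := ∏ i, (x i : ℂ) ^ α i

/-- `D^β_x D^α_ξ a(x, ξ)` for a symbol `a`. -/
def symD {k : ℕ} (α β : Fin k → ℕ) (a : Eu k → Eu k → ℂ) (x ξ : Eu k) : ℂ :=
  mD β (fun y => mD α (a y) ξ) x

/-- The Hörmander class `S^d_{1,0}(ℝ^k × ℝ^k)` of uniformly estimated symbols. -/
def IsSymbol {k : ℕ} (d : ℝ) (a : Eu k → Eu k → ℂ) : Prop :=
  ContDiff ℝ (⊤ : ℕ∞) (fun z : Eu k × Eu k => a z.1 z.2) ∧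
    ∀ α β : Fin k → ℕ, ∃ C : ℝ, ∀ x ξ, ‖symD α β a x ξ‖ ≤ C * jap ξ ^ (d - (degS α : ℝ))

/-- `k` is the inverse Fourier transform in `ξ_n` of `ξ_n ↦ D^α_ξ D^β_x a(x',0,ξ',ξ_n)`
away from `z_n = 0`, smooth there. -/
def TCkernel {m : ℕ} (a : Eu (m + 1) → Eu (m + 1) → ℂ) (α β : Fin (m + 1) → ℕ)
    (k : Eu m → ℝ → Eu m → ℂ) : Prop :=
  (∀ x' ξ', ContDiffOn ℝ (⊤ : ℕ∞) (fun t => k x' t ξ') {t : ℝ | t ≠ 0}) ∧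
    ∀ (x' ξ' : Eu m) (φ : ℝ → ℂ), ContDiff ℝ (⊤ : ℕ∞) φ → HasCompactSupport φ →
      tsupport φ ⊆ {t : ℝ | t ≠ 0} →
      (∫ τ : ℝ, symD α β a (Fin.snoc x' 0) (Fin.snoc ξ' τ) * pFinv1 φ τ) =
        ∫ t : ℝ, k x' t ξ' * φ t

/-- The uniform two-sided transmission condition at `x_n = 0`. -/
def HasUTTC {m : ℕ} (a : Eu (m + 1) → Eu (m + 1) → ℂ) : Prop :=
  ∀ α β : Fin (m + 1) → ℕ, ∃ k : Eu m → ℝ → Eu m → ℂ, TCkernel a α β k ∧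
    ∀ (l mm : ℕ) (ξ' : Eu m), ∃ C : ℝ, ∀ (x' : Eu m) (t : ℝ), t ≠ 0 →
      ‖(t : ℂ) ^ l * iteratedDeriv mm (fun u => k x' u ξ') t‖ ≤ C

/-- `t^l D^m_t D^{α'}_{ξ'} D^{β'}_{x'} k̃(x', t, ξ')`, the `t`-derivatives being taken
within `[0,∞)`. -/
def pkDeriv {m : ℕ} (α' β' : Fin m → ℕ) (l mm : ℕ) (k : Eu m → ℝ → Eu m → ℂ)
    (x' : Eu m) (t : ℝ) (ξ' : Eu m) : ℂ :=
  (t : ℂ) ^ l *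
    iteratedDerivWithin mm
      (fun u => mDeriv β' (fun y => mDeriv α' (fun η => k y u η) ξ') x') (Set.Ici 0) t

/-- The seminorm `sup ⟨ξ'⟩^{-(μ+1-|α'|-l+m)} |t^l D^m_t D^{α'}_{ξ'} D^{β'}_{x'} k̃|` of a
Poisson/trace symbol-kernel. -/
def pkSemiE {m : ℕ} (μ : ℝ) (α' β' : Fin m → ℕ) (l mm : ℕ) (k : Eu m → ℝ → Eu m → ℂ) :
    ℝ≥0∞ :=
  ⨆ (x' : Eu m) (ξ' : Eu m) (t : Set.Ici (0 : ℝ)),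
    ENNReal.ofReal
      (jap ξ' ^ (-(μ + 1 - (degS α' : ℝ) - (l : ℝ) + (mm : ℝ))) *
        ‖pkDeriv α' β' l mm k x' t ξ'‖)

/-- Membership in the symbol-kernel class `S^μ_{1,0}(ℝ^m × ℝ^m, 𝒮(ℝ̄₊))`. -/
def InPK {m : ℕ} (μ : ℝ) (k : Eu m → ℝ → Eu m → ℂ) : Prop :=
  ContDiffOn ℝ (⊤ : ℕ∞) (fun z : (Eu m × ℝ) × Eu m => k z.1.1 z.1.2 z.2) {z | 0 ≤ z.1.2} ∧
    ∀ (α' β' : Fin m → ℕ) (l mm : ℕ), pkSemiE μ α' β' l mm k ≠ ∞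

/-- `‖k̃‖_{(N)}`: maximum of the symbol-kernel seminorms over all indices `≤ N`. -/
def pkNormN {m : ℕ} (μ : ℝ) (N : ℕ) (k : Eu m → ℝ → Eu m → ℂ) : ℝ≥0∞ :=
  ⨆ (α' : Fin m → ℕ) (_ : degS α' ≤ N) (β' : Fin m → ℕ) (_ : degS β' ≤ N)
    (l : ℕ) (_ : l ≤ N) (mm : ℕ) (_ : mm ≤ N), pkSemiE μ α' β' l mm k

/-- `x_n^l D^m_{x_n} y_n^{l'} D^{m'}_{y_n} D^{α'}_{ξ'} D^{β'}_{x'} g̃`, the normal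
derivatives being taken within `[0,∞)`. -/
def sgDeriv {m : ℕ} (α' β' : Fin m → ℕ) (l mm l' mm' : ℕ)
    (g : Eu m → ℝ → ℝ → Eu m → ℂ) (x' : Eu m) (s t : ℝ) (ξ' : Eu m) : ℂ :=
  (s : ℂ) ^ l * (t : ℂ) ^ l' *
    iteratedDerivWithin mm
      (fun u =>
        iteratedDerivWithin mm'
          (fun v => mDeriv β' (fun y => mDeriv α' (fun η => g y u v η) ξ') x')
          (Set.Ici 0) t)
      (Set.Ici 0) s

/-- Singular Green symbol-kernel seminorm. -/
def sgSemiE {m : ℕ} (d : ℝ) (α' β' : Fin m → ℕ) (l mm l' mm' : ℕ)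
    (g : Eu m → ℝ → ℝ → Eu m → ℂ) : ℝ≥0∞ :=
  ⨆ (x' : Eu m) (ξ' : Eu m) (s : Set.Ici (0 : ℝ)) (t : Set.Ici (0 : ℝ)),
    ENNReal.ofReal
      (jap ξ' ^
          (-(d + 1 - (degS α' : ℝ) - (l : ℝ) + (mm : ℝ) - (l' : ℝ) + (mm' : ℝ))) *
        ‖sgDeriv α' β' l mm l' mm' g x' s t ξ'‖)

/-- Membership in the singular Green symbol-kernel class
`S^{d-1}_{1,0}(ℝ^m × ℝ^m, 𝒮(ℝ̄²₊₊))` (for operators of order `d`). -/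
def InSG {m : ℕ} (d : ℝ) (g : Eu m → ℝ → ℝ → Eu m → ℂ) : Prop :=
  ContDiffOn ℝ (⊤ : ℕ∞) (fun z : ((Eu m × ℝ) × ℝ) × Eu m => g z.1.1.1 z.1.1.2 z.1.2 z.2)
      {z | 0 ≤ z.1.1.2 ∧ 0 ≤ z.1.2} ∧
    ∀ (α' β' : Fin m → ℕ) (l mm l' mm' : ℕ), sgSemiE d α' β' l mm l' mm' g ≠ ∞

/-- `‖g̃‖_{(N)}`. -/
def sgNormN {m : ℕ} (d : ℝ) (N : ℕ) (g : Eu m → ℝ → ℝ → Eu m → ℂ) : ℝ≥0∞ :=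
  ⨆ (α' : Fin m → ℕ) (_ : degS α' ≤ N) (β' : Fin m → ℕ) (_ : degS β' ≤ N)
    (l : ℕ) (_ : l ≤ N) (mm : ℕ) (_ : mm ≤ N) (l' : ℕ) (_ : l' ≤ N) (mm' : ℕ)
    (_ : mm' ≤ N), sgSemiE d α' β' l mm l' mm' g

/-- The Poisson operator `OPK(k̃)v(x', x_n) = (2π)^{1-n} ∫ e^{i x'·ξ'} k̃(x',x_n,ξ') ℱv(ξ') dξ'`. -/
def OPK {m : ℕ} (k : Eu m → ℝ → Eu m → ℂ) (v : Eu m → ℂ) : Eu (m + 1) → ℂ :=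
  fun x =>
    (((2 * Real.pi) ^ m : ℝ)⁻¹) •
      ∫ ξ' : Eu m,
        Complex.exp (Complex.I * (dotp (Fin.init x) ξ' : ℂ)) *
          (k (Fin.init x) (x (Fin.last m)) ξ' * pF v ξ')

/-- The partial Fourier transform `ú(ξ', y_n)` of `u(y', y_n)` in `y'`. -/
def hatu {m : ℕ} (u : Eu (m + 1) → ℂ) (ξ' : Eu m) (t : ℝ) : ℂ :=
  ∫ y' : Eu m, Complex.exp (-(Complex.I * (dotp y' ξ' : ℂ))) * u (Fin.snoc y' t)

/-- The class-0 trace operator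
`OPT(t̃)u(x') = (2π)^{1-n} ∫∫ e^{i x'·ξ'} t̃(x',y_n,ξ') ú(ξ',y_n) dy_n dξ'`. -/
def OPT {m : ℕ} (tk : Eu m → ℝ → Eu m → ℂ) (u : Eu (m + 1) → ℂ) : Eu m → ℂ :=
  fun x' =>
    (((2 * Real.pi) ^ m : ℝ)⁻¹) •
      ∫ ξ' : Eu m, ∫ t in Set.Ioi (0 : ℝ),
        Complex.exp (Complex.I * (dotp x' ξ' : ℂ)) * (tk x' t ξ' * hatu u ξ' t)

/-- The class-0 singular Green operator
`OPG(g̃)u(x',x_n) = (2π)^{1-n} ∫∫ e^{i x'·ξ'} g̃(x',x_n,y_n,ξ') ú(ξ',y_n) dy_n dξ'`. -/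
def OPG {m : ℕ} (g : Eu m → ℝ → ℝ → Eu m → ℂ) (u : Eu (m + 1) → ℂ) : Eu (m + 1) → ℂ :=
  fun x =>
    (((2 * Real.pi) ^ m : ℝ)⁻¹) •
      ∫ ξ' : Eu m, ∫ t in Set.Ioi (0 : ℝ),
        Complex.exp (Complex.I * (dotp (Fin.init x) ξ' : ℂ)) *
          (g (Fin.init x) (x (Fin.last m)) t ξ' * hatu u ξ' t)

/-- Half-space multi-index derivative: the `x_n`-derivatives are taken within `[0,∞)`,
the tangential ones in the full space. -/
def hDeriv {m : ℕ} (β : Fin (m + 1) → ℕ) (f : Eu (m + 1) → ℂ) (x : Eu (m + 1)) : ℂ :=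
  iteratedDerivWithin (β (Fin.last m))
    (fun t =>
      mDeriv (fun i : Fin m => β i.castSucc) (fun y : Eu m => f (Fin.snoc y t))
        (Fin.init x))
    (Set.Ici 0) (x (Fin.last m))

/-- The Schwartz seminorm `‖u‖_{𝒮,N} = max_{|γ|,|δ| ≤ N} sup |y^γ D^δ u|`. -/
def swSemi {k : ℕ} (N : ℕ) (u : Eu k → ℂ) : ℝ≥0∞ :=
  ⨆ (γ : Fin k → ℕ) (_ : degS γ ≤ N) (δ : Fin k → ℕ) (_ : degS δ ≤ N) (y : Eu k),
    ENNReal.ofReal ‖monom γ y * mDeriv δ u y‖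

/-- `supp ℱf ⊆ S` for a (polynomially bounded, continuous) function `f`:  the pairing
`⟨ℱf, φ⟩ = ∫ f ℱφ` vanishes for every Schwartz `φ` with support disjoint from `S`. -/
def FsuppIn {m : ℕ} (f : Eu m → ℂ) (S : Set (Eu m)) : Prop :=
  ∀ φ : SchwartzMap (Eu m) ℂ, Disjoint (tsupport (φ : Eu m → ℂ)) S →
    (∫ x, f x * pF (fun y => φ y) x) = 0

/-- The one-sided trace `γ_j v (x') = ((-i ∂_{x_n})^j v)(x', 0)`. -/
def traceJ {m : ℕ} (j : ℕ) (v : Eu (m + 1) → ℂ) (x' : Eu m) : ℂ :=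
  (-Complex.I) ^ j * iteratedDeriv j (fun t => v (Fin.snoc x' t)) 0


/-! ### The Fourier transform on `ℝ^m` with its product structure -/

section

open scoped FourierTransform SchwartzMap

/-- The dilation `x ↦ r x` of `ℝ^m`. -/
def dilE (m : ℕ) (r : ℝ) (hr : r ≠ 0) : Eu m ≃L[ℝ] Eu m :=
  ContinuousLinearEquiv.smulLeft (Units.mk0 r hr)

@[simp] lemma dilE_apply (m : ℕ) (r : ℝ) (hr : r ≠ 0) (x : Eu m) : dilE m r hr x = r • x := rfl

/-- The Schwartz function `x ↦ T (r x)`. -/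
def dil {m : ℕ} (r : ℝ) (hr : r ≠ 0) : 𝓢(Eu m, ℂ) →L[ℂ] 𝓢(Eu m, ℂ) :=
  SchwartzMap.compCLMOfContinuousLinearEquiv ℂ (dilE m r hr)

@[simp] lemma dil_apply {m : ℕ} (r : ℝ) (hr : r ≠ 0) (T : 𝓢(Eu m, ℂ)) (x : Eu m) :
    dil r hr T x = T (r • x) := rfl

lemma inv_two_pi_ne : ((2 * π)⁻¹ : ℝ) ≠ 0 := by positivity

lemma dotp_comm {m : ℕ} (x y : Eu m) : dotp x y = dotp y x := by
  simp only [dotp, mul_comm]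

lemma dotp_add_right {m : ℕ} (x y z : Eu m) : dotp x (y + z) = dotp x y + dotp x z := by
  simp [dotp, mul_add, Finset.sum_add_distrib]

lemma dotp_sub_left {m : ℕ} (x y z : Eu m) : dotp (x - y) z = dotp x z - dotp y z := by
  simp [dotp, sub_mul, Finset.sum_sub_distrib]

lemma dotp_neg_left {m : ℕ} (x z : Eu m) : dotp (-x) z = - dotp x z := by
  simp [dotp]

lemma dotp_neg_right {m : ℕ} (x z : Eu m) : dotp x (-z) = - dotp x z := by
  simp [dotp]

lemma dotp_smul_left {m : ℕ} (r : ℝ) (x z : Eu m) : dotp (r • x) z = r * dotp x z := by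
  simp [dotp, Finset.mul_sum, mul_assoc]

lemma dotp_smul_right {m : ℕ} (r : ℝ) (x z : Eu m) : dotp x (r • z) = r * dotp x z := by
  simp [dotp, Finset.mul_sum, mul_left_comm]

lemma continuous_dotp {m : ℕ} : Continuous (fun z : Eu m × Eu m => dotp z.1 z.2) := by
  unfold dotp; fun_prop

/-- The Fourier transform of Schwartz functions on `ℝ^m` with its product structure, obtained by
transport from `EuclideanSpace`. -/
def ftS (m : ℕ) : 𝓢(Eu m, ℂ) →L[ℂ] 𝓢(Eu m, ℂ) :=
  dil (2 * π)⁻¹ inv_two_pi_ne ∘L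
    SchwartzMap.compCLMOfContinuousLinearEquiv ℂ (EuclideanSpace.equiv (Fin m) ℝ).symm ∘L
    SchwartzMap.fourierTransformCLM ℂ ∘L
    SchwartzMap.compCLMOfContinuousLinearEquiv ℂ (EuclideanSpace.equiv (Fin m) ℝ)

lemma fourier_eu {m : ℕ} (f : Eu m → ℂ) (x : Eu m) :
    𝓕 (fun v : EuclideanSpace ℝ (Fin m) => f v.ofLp) (WithLp.toLp 2 x)
      = ∫ y : Eu m, Complex.exp (-(Complex.I * (2 * π * dotp y x : ℝ))) * f y := by
  rw [Real.fourier_eq', ← (PiLp.volume_preserving_toLp (Fin m)).integral_comp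
    (MeasurableEquiv.toLp 2 (Fin m → ℝ)).measurableEmbedding]
  congr 1
  ext y
  simp only [smul_eq_mul]
  congr 2
  simp only [dotp, PiLp.inner_apply, RCLike.inner_apply, conj_trivial]
  push_cast
  simp only [mul_comm]
  ring

lemma ftS_apply {m : ℕ} (T : 𝓢(Eu m, ℂ)) (ξ : Eu m) : ftS m T ξ = pF (fun x => T x) ξ := by
  have h : ftS m T ξ = 𝓕 (fun v : EuclideanSpace ℝ (Fin m) => T v.ofLp)
    (WithLp.toLp 2 ((2 * π)⁻¹ • ξ)) := rfl
  rw [h, fourier_eu]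
  unfold pF
  congr 1
  ext y
  rw [dotp_smul_right]
  congr 4
  rw [← mul_assoc, mul_inv_cancel₀ (by positivity), one_mul]

/-- The inverse Fourier transform of Schwartz functions on `ℝ^m`. -/
def iftS (m : ℕ) : 𝓢(Eu m, ℂ) →L[ℂ] 𝓢(Eu m, ℂ) :=
  (((2 * π) ^ m : ℝ)⁻¹ : ℂ) • (dil (-1) (by norm_num) ∘L ftS m)

lemma iftS_apply {m : ℕ} (T : 𝓢(Eu m, ℂ)) (x : Eu m) : iftS m T x = pFinv (fun y => T y) x := by
  have h : iftS m T x = (((2 * π) ^ m : ℝ)⁻¹ : ℂ) * ftS m T ((-1 : ℝ) • x) := rfl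
  rw [h, ftS_apply]
  unfold pF pFinv
  rw [Complex.real_smul]
  push_cast
  congr 2
  ext y
  rw [dotp_smul_right, dotp_comm]
  push_cast
  congr 2
  ring

lemma pF_iftS {m : ℕ} (T : 𝓢(Eu m, ℂ)) (ξ : Eu m) : pF (fun x => iftS m T x) ξ = T ξ := by
  set e := EuclideanSpace.equiv (Fin m) ℝ
  let S : 𝓢(EuclideanSpace ℝ (Fin m), ℂ) := SchwartzMap.compCLMOfContinuousLinearEquiv ℂ e T
  let H : 𝓢(EuclideanSpace ℝ (Fin m), ℂ) := 𝓕⁻ S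
  have hH : 𝓕 H = S := FourierTransform.fourier_fourierInv_eq S
  have h1 : ∀ x : Eu m, iftS m T x = (((2 * π) ^ m : ℝ)⁻¹ : ℂ) * H (WithLp.toLp 2 ((2 * π)⁻¹ • x)) := by
    intro x
    change _ = _ * (𝓕⁻ S) _
    rw [SchwartzMap.fourierInv_coe, Real.fourierInv_eq_fourier_neg]
    have h : iftS m T x = (((2 * π) ^ m : ℝ)⁻¹ : ℂ) * ftS m T ((-1 : ℝ) • x) := rfl
    rw [h]
    congr 1
    change 𝓕 (fun v : EuclideanSpace ℝ (Fin m) => T v.ofLp) (WithLp.toLp 2 ((2 * π)⁻¹ • ((-1 : ℝ) • x))) = _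
    refine congrArg (𝓕 (fun v : EuclideanSpace ℝ (Fin m) => T v.ofLp)) ?_
    ext i
    simp
  have h2 : T ξ = 𝓕 (fun v : EuclideanSpace ℝ (Fin m) => H (WithLp.toLp 2 v.ofLp)) (WithLp.toLp 2 ξ) := by
    have : (𝓕 H) (WithLp.toLp 2 ξ) = S (WithLp.toLp 2 ξ) := by rw [hH]
    rw [SchwartzMap.fourier_coe] at this
    exact this.symm
  rw [h2, fourier_eu (fun v => H (WithLp.toLp 2 v))]
  unfold pF
  have h3 := MeasureTheory.Measure.integral_comp_smul (volume : Measure (Eu m))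
    (fun y => Complex.exp (-(Complex.I * (2 * π * dotp y ξ : ℝ))) * H (WithLp.toLp 2 y)) (2 * π)⁻¹
  have h4 : ∀ x : Eu m, cexp (-(I * (dotp x ξ : ℝ))) * iftS m T x =
     (((2 * π) ^ m : ℝ)⁻¹ : ℂ) * (fun y => Complex.exp (-(Complex.I * (2 * π * dotp y ξ : ℝ))) * H (WithLp.toLp 2 y)) ((2 * π)⁻¹ • x) := by
    intro x
    simp only
    rw [h1, dotp_smul_left, ← mul_assoc (2 * π), mul_inv_cancel₀ (by positivity), one_mul]
    ring
  simp_rw [h4]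
  rw [integral_const_mul]
  erw [h3]
  rw [Module.finrank_fin_fun, inv_pow, inv_inv, abs_of_pos (by positivity), Complex.real_smul,
    ← mul_assoc]
  push_cast
  rw [inv_mul_cancel₀, one_mul]
  have := Real.pi_ne_zero
  simp [this]

end

/-! ### Tempered distributions and convolution integrals -/

section

open scoped SchwartzMap BoundedContinuousFunction

set_option linter.unusedSectionVars false

variable {V : Type} [NormedAddCommGroup V] [NormedSpace ℝ V] [FiniteDimensional ℝ V]
  [MeasureSpace V] [BorelSpace V] [(volume : Measure V).IsAddHaarMeasure]

/-- Tempered distributions on a finite-dimensional space `V`. -/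
abbrev TDV (V : Type) [NormedAddCommGroup V] [NormedSpace ℝ V] := 𝓢(V, ℂ) →L[ℂ] ℂ

lemma schwartz_wt_bound (N l : ℕ) (κ : 𝓢(V, ℂ)) :
    ∃ C : ℝ, 0 ≤ C ∧ ∀ z, (1 + ‖z‖) ^ N * ‖iteratedFDeriv ℝ l κ z‖ ≤ C :=
  ⟨2 ^ N * ((Finset.Iic (N, l)).sup (fun m => SchwartzMap.seminorm ℂ m.1 m.2)) κ,
    by positivity,
    fun z => SchwartzMap.one_add_le_sup_seminorm_apply (𝕜 := ℂ) (m := (N, l)) le_rfl le_rfl κ z⟩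

lemma schwartz_wt_integrable (N : ℕ) (φ : 𝓢(V, ℂ)) :
    Integrable (fun y => (1 + ‖y‖) ^ N * ‖φ y‖) := by
  have h1 := (φ.integrable_pow_mul volume 0).const_mul (2 ^ (N - 1))
  have h2 := (φ.integrable_pow_mul volume N).const_mul (2 ^ (N - 1))
  refine (h1.add h2).mono' (by fun_prop) (Eventually.of_forall fun y => ?_)
  rw [Real.norm_of_nonneg (by positivity)]
  have := add_pow_le (zero_le_one) (norm_nonneg y) N
  simp only [Pi.add_apply, pow_zero, one_mul]
  calc _ ≤ (2 ^ (N - 1) * (1 ^ N + ‖y‖ ^ N)) * ‖φ y‖ := by gcongr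
    _ = _ := by ring

/-- The Banach space of bounded continuous fields of `l`-linear forms on `V`. -/
def BJ (V : Type) [NormedAddCommGroup V] [NormedSpace ℝ V] (l : ℕ) : Type :=
  V →ᵇ (V [×l]→L[ℝ] ℂ)

instance (l : ℕ) : NormedAddCommGroup (BJ V l) :=
  inferInstanceAs (NormedAddCommGroup (V →ᵇ (V [×l]→L[ℝ] ℂ)))
instance (l : ℕ) : NormedSpace ℂ (BJ V l) :=
  inferInstanceAs (NormedSpace ℂ (V →ᵇ (V [×l]→L[ℝ] ℂ)))
instance (l : ℕ) : CompleteSpace (BJ V l) :=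
  inferInstanceAs (CompleteSpace (V →ᵇ (V [×l]→L[ℝ] ℂ)))

/-- Evaluation at a point. -/
def BJev (l : ℕ) (z : V) : BJ V l →L[ℂ] (V [×l]→L[ℝ] ℂ) :=
  BoundedContinuousFunction.evalCLM (α := V) (β := V [×l]→L[ℝ] ℂ) ℂ z

lemma BJ_ext {l : ℕ} {a b : BJ V l} (h : ∀ z, BJev l z a = BJev l z b) : a = b :=
  BoundedContinuousFunction.ext h

lemma BJ_norm_le {l : ℕ} {a : BJ V l} {C : ℝ} (hC : 0 ≤ C) (h : ∀ z, ‖BJev l z a‖ ≤ C) :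
    ‖a‖ ≤ C :=
  (BoundedContinuousFunction.norm_le hC).2 h

lemma BJev_norm_le {l : ℕ} (a : BJ V l) (z : V) : ‖BJev l z a‖ ≤ ‖a‖ :=
  BoundedContinuousFunction.norm_coe_le_norm a z

/-- The weighted derivative `(1 + |z|)^N D^l φ(z)` as a bounded continuous function. -/
def wJ (N l : ℕ) : 𝓢(V, ℂ) →ₗ[ℂ] BJ V l where
  toFun φ := BoundedContinuousFunction.ofNormedAddCommGroup
    (fun z => ((1 + ‖z‖) ^ N : ℝ) • iteratedFDeriv ℝ l φ z)
    (by
      have := (φ.smooth ⊤).continuous_iteratedFDeriv (m := l) (by exact_mod_cast le_top)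
      fun_prop)
    (schwartz_wt_bound N l φ).choose
    (fun z => by
      rw [norm_smul, Real.norm_of_nonneg (by positivity)]
      exact (schwartz_wt_bound N l φ).choose_spec.2 z)
  map_add' φ ψ := by
    refine BJ_ext fun z => ?_
    have := iteratedFDeriv_add_apply (x := z) ((φ.smooth l).contDiffAt) ((ψ.smooth l).contDiffAt)
    change ((1 + ‖z‖) ^ N : ℝ) • iteratedFDeriv ℝ l (⇑φ + ⇑ψ) z = _
    rw [this, smul_add]
    rfl
  map_smul' c φ := by
    refine BJ_ext fun z => ?_
    have := iteratedFDeriv_const_smul_apply (x := z) (a := c) ((φ.smooth l).contDiffAt)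
    change ((1 + ‖z‖) ^ N : ℝ) • iteratedFDeriv ℝ l (c • ⇑φ) z = _
    rw [this, smul_comm]
    rfl

lemma wJ_apply (N l : ℕ) (φ : 𝓢(V, ℂ)) (z : V) :
    BJev l z (wJ N l φ) = ((1 + ‖z‖) ^ N : ℝ) • iteratedFDeriv ℝ l φ z := rfl

/-- All weighted derivatives of order at most `N`. -/
def wJs (N : ℕ) :
    𝓢(V, ℂ) →ₗ[ℂ] ((l : Fin (N + 1)) → BJ V l) :=
  LinearMap.pi fun l => wJ N l

lemma wJs_injective (N : ℕ) : Function.Injective (wJs (V := V) N) := by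
  intro φ ψ h
  ext z
  have h0 : BJev 0 z (wJ N 0 φ) = BJev 0 z (wJ N 0 ψ) := by
    have := congrArg (fun b => b 0) h
    exact congrArg (BJev 0 z) this
  rw [wJ_apply, wJ_apply] at h0
  have h3 := congrArg (fun b => b 0) h0
  have h4 : ((1 + ‖z‖) ^ N : ℝ) • φ z = ((1 + ‖z‖) ^ N : ℝ) • ψ z := h3
  exact smul_right_injective _ (show ((1 + ‖z‖) ^ N : ℝ) ≠ 0 by positivity) h4

/-- A tempered distribution extends to a functional on a Banach space of weighted derivatives. -/
lemma TD_extend (u : TDV V) : ∃ (N : ℕ)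
    (L : ((l : Fin (N + 1)) → BJ V l) →L[ℂ] ℂ),
    ∀ φ, u φ = L (wJs N φ) := by
  obtain ⟨s, C, -, hC⟩ := Seminorm.bound_of_continuous (schwartz_withSeminorms ℂ V ℂ)
    ((normSeminorm ℂ ℂ).comp u.toLinearMap) (by
      change Continuous fun φ => ‖u φ‖
      fun_prop)
  obtain ⟨N, hN⟩ : ∃ N : ℕ, ∀ i ∈ s, i.1 ≤ N ∧ i.2 ≤ N :=
    ⟨s.sup (fun i => i.1 + i.2), fun i hi => by
      have : i.1 + i.2 ≤ _ := Finset.le_sup (f := fun i : ℕ × ℕ => i.1 + i.2) hi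
      omega⟩
  have hbd : ∀ φ, ‖u φ‖ ≤ C * ‖wJs N φ‖ := by
    intro φ
    refine (hC φ).trans ?_
    change C * (s.sup (schwartzSeminormFamily ℂ V ℂ)) φ ≤ _
    gcongr
    refine Seminorm.finset_sup_apply_le (norm_nonneg _) fun i hi => ?_
    refine SchwartzMap.seminorm_le_bound ℂ _ _ _ (norm_nonneg _) fun z => ?_
    have h1 := norm_le_pi_norm (wJs N φ) ⟨i.2, Nat.lt_succ_of_le (hN i hi).2⟩
    have h2 := BJev_norm_le (wJs N φ ⟨i.2, Nat.lt_succ_of_le (hN i hi).2⟩) z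
    refine le_trans ?_ (h2.trans h1)
    change _ ≤ ‖((1 + ‖z‖) ^ N : ℝ) • iteratedFDeriv ℝ i.2 φ z‖
    rw [norm_smul, Real.norm_of_nonneg (by positivity)]
    gcongr
    calc ‖z‖ ^ i.1 ≤ (1 + ‖z‖) ^ i.1 := by gcongr; linarith
      _ ≤ _ := pow_le_pow_right₀ (by linarith [norm_nonneg z]) (hN i hi).1
  let e := LinearEquiv.ofInjective (wJs (V := V) N) (wJs_injective N)
  let f0 : StrongDual ℂ (LinearMap.range (wJs (V := V) N)) :=
    (u.toLinearMap ∘ₗ e.symm.toLinearMap).mkContinuous C (by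
      intro b
      obtain ⟨φ, rfl⟩ := e.surjective b
      simp only [LinearMap.comp_apply, LinearEquiv.coe_coe, LinearEquiv.symm_apply_apply]
      exact hbd φ)
  obtain ⟨L, hL, -⟩ := exists_extension_norm_eq _ f0
  refine ⟨N, L, fun φ => ?_⟩
  have h1 := hL (e φ)
  have h2 : f0 (e φ) = u φ := by
    simp [f0]
  rw [← h2, ← h1]
  rfl

lemma iteratedFDeriv_transl (κ : 𝓢(V, ℂ)) (l : ℕ) (y z : V) :
    iteratedFDeriv ℝ l (κ.compSubConstCLM ℂ y) z = iteratedFDeriv ℝ l κ (z - y) := by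
  have : (κ.compSubConstCLM ℂ y : V → ℂ) = fun z => κ (z - y) := rfl
  rw [this, iteratedFDeriv_comp_sub]

/-- The weighted derivatives of the translates grow at most polynomially. -/
lemma transl_bound (N l : ℕ) (κ : 𝓢(V, ℂ)) :
    ∃ C : ℝ, 0 ≤ C ∧ ∀ y, ‖wJ N l (κ.compSubConstCLM ℂ y)‖ ≤ C * (1 + ‖y‖) ^ N := by
  obtain ⟨C, hC0, hC⟩ := schwartz_wt_bound N l κ
  refine ⟨C, hC0, fun y => ?_⟩
  refine BJ_norm_le (by positivity) fun z => ?_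
  rw [wJ_apply, iteratedFDeriv_transl, norm_smul, Real.norm_of_nonneg (by positivity)]
  have h : 1 + ‖z‖ ≤ (1 + ‖z - y‖) * (1 + ‖y‖) := by
    have := norm_add_le (z - y) y
    rw [sub_add_cancel] at this
    nlinarith [norm_nonneg (z - y), norm_nonneg y, mul_nonneg (norm_nonneg (z - y)) (norm_nonneg y)]
  calc _ ≤ ((1 + ‖z - y‖) * (1 + ‖y‖)) ^ N * ‖iteratedFDeriv ℝ l κ (z - y)‖ := by gcongr
    _ = ((1 + ‖z - y‖) ^ N * ‖iteratedFDeriv ℝ l κ (z - y)‖) * (1 + ‖y‖) ^ N := by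
      rw [mul_pow]; ring
    _ ≤ _ := by gcongr; exact hC _

/-- Translation is continuous into the space of weighted derivatives. -/
lemma transl_continuous (N l : ℕ) (κ : 𝓢(V, ℂ)) :
    Continuous fun y => wJ N l (κ.compSubConstCLM ℂ y) := by
  obtain ⟨C, hC0, hC⟩ := schwartz_wt_bound N (l + 1) κ
  rw [continuous_iff_continuousAt]
  intro y0
  rw [ContinuousAt, tendsto_iff_dist_tendsto_zero]
  have hlim : Tendsto (fun y => (C * (2 + ‖y0‖) ^ N) * ‖y - y0‖) (𝓝 y0) (𝓝 0) := by
    have : Continuous (fun y => (C * (2 + ‖y0‖) ^ N) * ‖y - y0‖) := by fun_prop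
    simpa using this.tendsto y0
  refine squeeze_zero' (Eventually.of_forall fun y => dist_nonneg) ?_ hlim
  filter_upwards [Metric.closedBall_mem_nhds y0 zero_lt_one] with y hy
  rw [dist_eq_norm]
  refine BJ_norm_le (by positivity) fun z => ?_
  rw [map_sub, wJ_apply, wJ_apply, iteratedFDeriv_transl,
    iteratedFDeriv_transl,
    show ((1 + ‖z‖) ^ N : ℝ) • iteratedFDeriv ℝ l κ (z - y) - ((1 + ‖z‖) ^ N : ℝ) •
      iteratedFDeriv ℝ l κ (z - y0) = ((1 + ‖z‖) ^ N : ℝ) • (iteratedFDeriv ℝ l κ (z - y) -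
      iteratedFDeriv ℝ l κ (z - y0)) from (smul_sub _ _ _).symm, norm_smul, Real.norm_of_nonneg (by positivity)]
  have key : ‖iteratedFDeriv ℝ l κ (z - y) - iteratedFDeriv ℝ l κ (z - y0)‖ ≤
      (C * (2 + ‖y0‖) ^ N / (1 + ‖z‖) ^ N) * ‖(z - y) - (z - y0)‖ := by
    refine (convex_closedBall (z - y0) 1).norm_image_sub_le_of_norm_fderiv_le (𝕜 := ℝ)
      (fun w _ => ?_) (fun w hw => ?_) ?_ ?_
    · exact ((κ.smooth ⊤).differentiable_iteratedFDeriv (m := l)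
        (by exact_mod_cast WithTop.coe_lt_top l)) w
    · rw [norm_fderiv_iteratedFDeriv, le_div_iff₀ (by positivity)]
      have h : 1 + ‖z‖ ≤ (2 + ‖y0‖) * (1 + ‖w‖) := by
        have h1 : ‖w - (z - y0)‖ ≤ 1 := by simpa [dist_eq_norm] using hw
        have h2 : ‖z‖ ≤ ‖w‖ + ‖w - (z - y0)‖ + ‖y0‖ := by
          calc ‖z‖ = ‖w - (w - (z - y0)) + y0‖ := by congr 1; abel
            _ ≤ _ := (norm_add_le _ _).trans (by gcongr; exact norm_sub_le _ _)
        nlinarith [norm_nonneg w, norm_nonneg y0, mul_nonneg (norm_nonneg w) (norm_nonneg y0)]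
      calc _ ≤ ‖iteratedFDeriv ℝ (l + 1) κ w‖ * ((2 + ‖y0‖) * (1 + ‖w‖)) ^ N := by gcongr
        _ = ((1 + ‖w‖) ^ N * ‖iteratedFDeriv ℝ (l + 1) κ w‖) * (2 + ‖y0‖) ^ N := by
          rw [mul_pow]; ring
        _ ≤ _ := by gcongr; exact hC _
    · simp
    · simpa [dist_eq_norm, norm_sub_rev] using hy
  calc _ ≤ (1 + ‖z‖) ^ N * ((C * (2 + ‖y0‖) ^ N / (1 + ‖z‖) ^ N) * ‖(z - y) - (z - y0)‖) := by gcongr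
    _ = (C * (2 + ‖y0‖) ^ N) * ‖y - y0‖ := by
      rw [sub_sub_sub_cancel_left, norm_sub_rev y0 y]
      field_simp

lemma conv_integrable (l : ℕ) (κ φ : 𝓢(V, ℂ)) (z : V) :
    Integrable fun y => φ y • iteratedFDeriv ℝ l κ (z - y) := by
  obtain ⟨C, hC0, hC⟩ := schwartz_wt_bound 0 l κ
  have hc := (κ.smooth ⊤).continuous_iteratedFDeriv (m := l) (by exact_mod_cast le_top)
  refine (φ.integrable.norm.mul_const C).mono' (Continuous.aestronglyMeasurable ?_) ?_
  · exact φ.continuous.smul (hc.comp (by fun_prop))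
  · refine Eventually.of_forall fun y => ?_
    rw [norm_smul]
    gcongr
    simpa using hC (z - y)

/-- Differentiation under the integral sign in a convolution. -/
lemma fderiv_conv {W : Type} [NormedAddCommGroup W] [NormedSpace ℝ W] [NormedSpace ℂ W]
    [SMulCommClass ℝ ℂ W] [CompleteSpace W] (φ : 𝓢(V, ℂ)) (g : V → W)
    (hg : ContDiff ℝ 1 g) (C : ℝ) (hC0 : ∀ z, ‖g z‖ ≤ C) (hC : ∀ z, ‖fderiv ℝ g z‖ ≤ C) (z w : V) :
    fderiv ℝ (fun z => ∫ y, φ y • g (z - y)) z w = ∫ y, φ y • fderiv ℝ g (z - y) w := by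
  have hdiff := hg.differentiable (by norm_num)
  have hc := hg.continuous
  have hc1 := hg.continuous_fderiv (by norm_num)
  have hm : ∀ x, AEStronglyMeasurable (fun y => φ y • g (x - y)) volume := fun x =>
    (φ.continuous.smul (hc.comp (continuous_const.sub continuous_id))).aestronglyMeasurable
  have hm1 : AEStronglyMeasurable (fun y => φ y • fderiv ℝ g (z - y)) volume :=
    (φ.continuous.smul (hc1.comp (continuous_const.sub continuous_id))).aestronglyMeasurable
  have hi : Integrable (fun y => φ y • g (z - y)) := by
    refine (φ.integrable.norm.mul_const C).mono' (hm z) (Eventually.of_forall fun y => ?_)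
    rw [norm_smul]
    gcongr
    exact hC0 _
  have hi1 : Integrable (fun y => φ y • fderiv ℝ g (z - y)) := by
    refine (φ.integrable.norm.mul_const C).mono' hm1 (Eventually.of_forall fun y => ?_)
    rw [norm_smul]
    gcongr
    exact hC _
  have hd : HasFDerivAt (fun z => ∫ y, φ y • g (z - y))
      (∫ y, φ y • fderiv ℝ g (z - y)) z := by
    refine hasFDerivAt_integral_of_dominated_of_fderiv_le (𝕜 := ℝ) (s := Set.univ)
      (bound := fun y => ‖φ y‖ * C)
      (F' := fun x y => φ y • fderiv ℝ g (x - y)) univ_mem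
      (Eventually.of_forall hm) hi hm1 ?_ (φ.integrable.norm.mul_const C) ?_
    · refine Eventually.of_forall fun y x _ => ?_
      rw [norm_smul]
      gcongr
      exact hC _
    · refine Eventually.of_forall fun y x _ => ?_
      have h1 := (hdiff (x - y)).hasFDerivAt
      have h2 : HasFDerivAt (fun x => g (x - y)) (fderiv ℝ g (x - y)) x := by
        exact h1.comp x (hasFDerivAt_sub_const y)
      exact h2.const_smul (φ y)
  rw [hd.fderiv, ContinuousLinearMap.integral_apply hi1]
  rfl

lemma iteratedFDeriv_conv (κ φ χ : 𝓢(V, ℂ)) (hχ : ∀ z, χ z = ∫ y, φ y * κ (z - y))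
    (l : ℕ) : ∀ z, iteratedFDeriv ℝ l χ z = ∫ y, φ y • iteratedFDeriv ℝ l κ (z - y) := by
  induction l with
  | zero =>
    intro z
    ext v
    rw [iteratedFDeriv_zero_apply, hχ, ContinuousMultilinearMap.integral_apply (conv_integrable 0 κ φ z)]
    simp
  | succ l ih =>
    intro z
    obtain ⟨C, hC0, hC⟩ := schwartz_wt_bound 0 (l + 1) κ
    obtain ⟨C', hC0', hC'⟩ := schwartz_wt_bound 0 l κ
    have hc1 : ContDiff ℝ 1 (iteratedFDeriv ℝ l κ) :=
      (κ.smooth ⊤).iteratedFDeriv_right (m := 1) (i := l) (by exact_mod_cast le_top)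
    ext v
    have key := fderiv_conv φ (iteratedFDeriv ℝ l κ) hc1 (max C C')
      (fun z => le_max_of_le_right (by simpa using hC' z)) (fun z => le_max_of_le_left (by
        rw [norm_fderiv_iteratedFDeriv]; simpa using hC z)) z (v 0)
    rw [iteratedFDeriv_succ_apply_left, show iteratedFDeriv ℝ l χ =
      fun z => ∫ y, φ y • iteratedFDeriv ℝ l κ (z - y) from funext ih, key,
      ContinuousMultilinearMap.integral_apply (conv_integrable (l + 1) κ φ z)]
    have hi : Integrable (fun y => φ y • fderiv ℝ (iteratedFDeriv ℝ l κ) (z - y) (v 0)) := by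
      refine (φ.integrable.norm.mul_const (C * ‖v 0‖)).mono' (Continuous.aestronglyMeasurable ?_)
        (Eventually.of_forall fun y => ?_)
      · exact φ.continuous.smul (((hc1.continuous_fderiv (by norm_num)).comp
          (continuous_const.sub continuous_id)).clm_apply continuous_const)
      · rw [norm_smul]
        gcongr
        refine (ContinuousLinearMap.le_opNorm _ _).trans ?_
        rw [norm_fderiv_iteratedFDeriv]
        gcongr
        simpa using hC (z - y)
    rw [ContinuousMultilinearMap.integral_apply hi]
    refine integral_congr_ae (Eventually.of_forall fun y => ?_)
    simp only [smul_apply]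
    rw [iteratedFDeriv_succ_apply_left]

/-- A tempered distribution commutes with the integral defining a convolution of Schwartz
functions. -/
theorem TD_conv (u : TDV V) (κ φ χ : 𝓢(V, ℂ))
    (hχ : ∀ z, χ z = ∫ y, φ y * κ (z - y)) :
    Integrable (fun y => φ y * u (κ.compSubConstCLM ℂ y)) ∧
    u χ = ∫ y, φ y * u (κ.compSubConstCLM ℂ y) := by
  obtain ⟨N, L, hL⟩ := TD_extend u
  let G : V → ((l : Fin (N + 1)) → BJ V l) :=
    fun y => wJs N (κ.compSubConstCLM ℂ y)
  have hGc : Continuous G := continuous_pi fun l => transl_continuous N l κ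
  choose C hC0 hC using fun l => transl_bound N l κ
  have hGb : ∀ y, ‖G y‖ ≤ (∑ l : Fin (N + 1), C l) * (1 + ‖y‖) ^ N := by
    intro y
    have : 0 ≤ ∑ l : Fin (N + 1), C l := Finset.sum_nonneg fun l _ => hC0 l
    rw [pi_norm_le_iff_of_nonneg (by positivity)]
    intro l
    refine (hC l y).trans ?_
    gcongr
    exact Finset.single_le_sum (f := fun l : Fin (N + 1) => C l) (fun l _ => hC0 l) (Finset.mem_univ l)
  have hGi : Integrable fun y => φ y • G y := by
    refine ((schwartz_wt_integrable N φ).const_mul (∑ l : Fin (N + 1), C l)).mono'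
      (φ.continuous.smul hGc).aestronglyMeasurable (Eventually.of_forall fun y => ?_)
    rw [norm_smul]
    calc _ ≤ ‖φ y‖ * ((∑ l : Fin (N + 1), C l) * (1 + ‖y‖) ^ N) := by gcongr; exact hGb y
      _ = _ := by ring
  have hI : wJs N χ = ∫ y, φ y • G y := by
    funext l
    refine BJ_ext fun z => ?_
    let ev : ((l : Fin (N + 1)) → BJ V l) →L[ℂ] (V [×(l : ℕ)]→L[ℝ] ℂ) :=
      BJev l z ∘L ContinuousLinearMap.proj l
    have h1 : BJev l z ((∫ y, φ y • G y) l) = ∫ y, ev (φ y • G y) := (ev.integral_comp_comm hGi).symm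
    rw [h1]
    have h2 : ∀ y, ev (φ y • G y) = ((1 + ‖z‖) ^ N : ℝ) • (φ y • iteratedFDeriv ℝ l κ (z - y)) := by
      intro y
      rw [map_smul]
      change φ y • (((1 + ‖z‖) ^ N : ℝ) • iteratedFDeriv ℝ l (κ.compSubConstCLM ℂ y) z) = _
      rw [iteratedFDeriv_transl, smul_comm]
    simp_rw [h2]
    rw [integral_smul, ← iteratedFDeriv_conv κ φ χ hχ]
    rfl
  have h3 : ∀ y, φ y * u (κ.compSubConstCLM ℂ y) = L (φ y • G y) := by
    intro y
    rw [map_smul, hL, smul_eq_mul]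
  simp_rw [h3]
  refine ⟨L.integrable_comp hGi, ?_⟩
  rw [hL, hI, L.integral_comp_comm hGi]

lemma TD_conv_continuous (u : TDV V) (κ : 𝓢(V, ℂ)) :
    Continuous fun y => u (κ.compSubConstCLM ℂ y) := by
  obtain ⟨N, L, hL⟩ := TD_extend u
  simp_rw [hL]
  exact L.continuous.comp (continuous_pi fun l => transl_continuous N l κ)

end

/-! ### Littlewood–Paley pieces as convolutions with kernels -/

section

open scoped SchwartzMap

/-- The reflected translate `z ↦ κ (y - z)`. -/
def kt {m : ℕ} (κ : 𝓢(Eu m, ℂ)) (y : Eu m) : 𝓢(Eu m, ℂ) :=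
  (dil (-1) (by norm_num) κ).compSubConstCLM ℂ y

@[simp] lemma kt_apply {m : ℕ} (κ : 𝓢(Eu m, ℂ)) (y z : Eu m) : kt κ y z = κ (y - z) := by
  change κ ((-1 : ℝ) • (z - y)) = _
  congr 1
  rw [neg_one_smul, neg_sub]

/-- A tempered distribution commutes with the integral defining a convolution. -/
lemma TD_kt {m : ℕ} (u : TD m) (κ φ χ : 𝓢(Eu m, ℂ))
    (hχ : ∀ z, χ z = ∫ y, φ y * κ (y - z)) :
    Integrable (fun y => φ y * u (kt κ y)) ∧ u χ = ∫ y, φ y * u (kt κ y) := by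
  refine TD_conv u _ φ χ fun z => ?_
  rw [hχ]
  refine integral_congr_ae (Eventually.of_forall fun y => ?_)
  change φ y * κ (y - z) = φ y * κ ((-1 : ℝ) • (z - y))
  rw [neg_one_smul, neg_sub]

lemma TD_kt_continuous {m : ℕ} (u : TD m) (κ : 𝓢(Eu m, ℂ)) :
    Continuous fun y => u (kt κ y) :=
  TD_conv_continuous u _

lemma norm_cexp_I (r : ℝ) : ‖cexp (I * (r : ℂ))‖ = 1 := by
  rw [mul_comm]; exact Complex.norm_exp_ofReal_mul_I r

lemma norm_cexp_neg_I (r : ℝ) : ‖cexp (-(I * (r : ℂ)))‖ = 1 := by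
  have := norm_cexp_I (-r)
  push_cast at this
  rwa [mul_neg] at this

/-- `ℱ(Φ ℱ⁻¹φ)` is the convolution of `φ` with the reflected kernel `ℱ⁻¹Φ`. -/
lemma piece_conv {m : ℕ} (Φ φ : 𝓢(Eu m, ℂ)) (z : Eu m) :
    pF (fun η => Φ η * pFinv (fun y => φ y) η) z = ∫ y, φ y * iftS m Φ (y - z) := by
  have h_integ : Integrable (fun w : Eu m × Eu m =>
      (cexp (I * (dotp w.1 w.2 : ℂ)) * cexp (-(I * (dotp w.1 z : ℂ)))) * (Φ w.1 * φ w.2))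
      ((volume : Measure (Eu m)).prod volume) := by
    refine (Φ.integrable.mul_prod φ.integrable).bdd_mul (c := 1)
      (Continuous.aestronglyMeasurable ?_) (Eventually.of_forall fun w => ?_)
    · have h1 : Continuous fun w : Eu m × Eu m => dotp w.1 w.2 := continuous_dotp
      have h2 : Continuous fun w : Eu m × Eu m => dotp w.1 z := by unfold dotp; fun_prop
      fun_prop
    · rw [norm_mul, norm_cexp_I, norm_cexp_neg_I, one_mul]
  have hsw := integral_integral_swap (f := fun η y : Eu m =>
    (cexp (I * (dotp η y : ℂ)) * cexp (-(I * (dotp η z : ℂ)))) * (Φ η * φ y)) h_integ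
  unfold pF
  calc _ = ∫ η : Eu m, (((2 * Real.pi) ^ m : ℝ)⁻¹ : ℂ) * ∫ y : Eu m,
        (cexp (I * (dotp η y : ℂ)) * cexp (-(I * (dotp η z : ℂ)))) * (Φ η * φ y) := by
        congr 1
        ext η
        unfold pFinv
        beta_reduce
        rw [Complex.real_smul, mul_left_comm (Φ η), mul_left_comm (cexp _)]
        push_cast
        congr 1
        rw [← integral_const_mul, ← integral_const_mul]
        congr 1
        ext y
        ring
    _ = (((2 * Real.pi) ^ m : ℝ)⁻¹ : ℂ) * ∫ y : Eu m, ∫ η : Eu m,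
        (cexp (I * (dotp η y : ℂ)) * cexp (-(I * (dotp η z : ℂ)))) * (Φ η * φ y) := by
        rw [integral_const_mul, hsw]
    _ = _ := by
        rw [← integral_const_mul]
        congr 1
        ext y
        rw [iftS_apply]
        unfold pFinv
        rw [Complex.real_smul, mul_left_comm]
        push_cast
        congr 1
        rw [← integral_const_mul]
        congr 1
        ext η
        rw [dotp_sub_left, dotp_comm y, dotp_comm z, ← Complex.exp_add, sub_eq_add_neg]
        push_cast
        rw [mul_add, mul_neg]
        ring

lemma exists_mul_schwartz {m : ℕ} (Φ ψ : 𝓢(Eu m, ℂ)) :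
    ∃ θ : 𝓢(Eu m, ℂ), ∀ x, θ x = Φ x * ψ x :=
  ⟨SchwartzMap.pairing (ContinuousLinearMap.mul ℂ ℂ) Φ ψ, fun _ => rfl⟩

lemma isLPpiece_kt {m : ℕ} (Φ : 𝓢(Eu m, ℂ)) (u : TD m) :
    IsLPpiece Φ u fun y => u (kt (iftS m Φ) y) := by
  refine ⟨TD_kt_continuous u _, fun φ ψ χ hψ hχ => ?_⟩
  rw [(TD_kt u (iftS m Φ) φ χ fun z => ?_).2]
  · simp_rw [mul_comm]
  · rw [hχ, ← piece_conv]
    simp_rw [hψ]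

/-- A continuous function is determined by its integrals against Schwartz functions. -/
lemma isLPpiece_unique {m : ℕ} (Φ : 𝓢(Eu m, ℂ)) (u : TD m) (g g' : Eu m → ℂ)
    (h : IsLPpiece Φ u g) (h' : IsLPpiece Φ u g') : g = g' := by
  rw [← Continuous.ae_eq_iff_eq volume h.1 h'.1]
  refine ae_eq_of_integral_contDiff_smul_eq h.1.locallyIntegrable h'.1.locallyIntegrable ?_
  intro φ hφ hφc
  have hs : HasCompactSupport (fun x => (φ x : ℂ)) :=
    hφc.comp_left (g := fun r : ℝ => (r : ℂ)) (by simp)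
  let φS : 𝓢(Eu m, ℂ) := hs.toSchwartzMap (Complex.ofRealCLM.contDiff.comp hφ)
  have hφS : ∀ x, φS x = (φ x : ℂ) := fun _ => rfl
  obtain ⟨θ, hθ⟩ := exists_mul_schwartz Φ (iftS m φS)
  have hχ : ∀ ξ, ftS m θ ξ = pF (fun η => Φ η * iftS m φS η) ξ := by
    intro ξ
    rw [ftS_apply]
    simp_rw [hθ]
  have e1 := h.2 φS (iftS m φS) (ftS m θ) (iftS_apply φS) hχ
  have e2 := h'.2 φS (iftS m φS) (ftS m θ) (iftS_apply φS) hχ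
  have e := e1.symm.trans e2
  simp_rw [hφS] at e
  simp_rw [Complex.real_smul, mul_comm (φ _ : ℂ)]
  exact e

/-- The Littlewood–Paley piece is the distribution tested against translates of the kernel. -/
theorem LPfun_eq {m : ℕ} (Φ : 𝓢(Eu m, ℂ)) (u : TD m) :
    LPfun Φ u = fun y => u (kt (iftS m Φ) y) := by
  have h : ∃ g, IsLPpiece Φ u g := ⟨_, isLPpiece_kt Φ u⟩
  unfold LPfun
  rw [dif_pos h]
  exact isLPpiece_unique Φ u _ _ h.choose_spec (isLPpiece_kt Φ u)

end

/-! ### Littlewood–Paley cut-offs and kernel bounds -/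

section

open scoped SchwartzMap

lemma two_pow_inv_ne (j : ℕ) : (((2 : ℝ) ^ j)⁻¹ : ℝ) ≠ 0 := by positivity

/-- The cut-off `Ψ_j = Φ_0 (2^{-j} ·)`. -/
def cutS {m : ℕ} (T : 𝓢(Eu m, ℂ)) (j : ℕ) : 𝓢(Eu m, ℂ) := dil ((2 : ℝ) ^ j)⁻¹ (two_pow_inv_ne j) T

/-- The kernel `ℱ⁻¹Ψ_j`. -/
def cutK {m : ℕ} (T : 𝓢(Eu m, ℂ)) (j : ℕ) : 𝓢(Eu m, ℂ) := iftS m (cutS T j)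

lemma cutK_apply {m : ℕ} (T : 𝓢(Eu m, ℂ)) (j : ℕ) (x : Eu m) :
    cutK T j x = ((2 : ℝ) ^ j) ^ m * iftS m T ((2 : ℝ) ^ j • x) := by
  unfold cutK
  rw [iftS_apply, iftS_apply]
  unfold pFinv
  have h := MeasureTheory.Measure.integral_comp_smul (volume : Measure (Eu m))
    (fun η => Complex.exp (I * (dotp ((2 : ℝ) ^ j • x) η : ℝ)) * T η) ((2 : ℝ) ^ j)⁻¹
  have h2 : ∀ ξ, Complex.exp (I * (dotp x ξ : ℂ)) * cutS T j ξ =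
      Complex.exp (I * (dotp ((2 : ℝ) ^ j • x) (((2 : ℝ) ^ j)⁻¹ • ξ) : ℝ)) * T (((2 : ℝ) ^ j)⁻¹ • ξ) := by
    intro ξ
    rw [dotp_smul_left, dotp_smul_right, mul_inv_cancel_left₀ (by positivity)]
    rfl
  simp_rw [h2]
  rw [h, Module.finrank_fin_fun, inv_pow, inv_inv, abs_of_pos (by positivity), Complex.real_smul,
    Complex.real_smul, Complex.real_smul]
  push_cast
  ring

section LP

variable {Ψ : ℝ → ℝ} {m : ℕ} {Φ : ℕ → 𝓢(Eu m, ℂ)}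

lemma eun_nonneg (ξ : Eu m) : 0 ≤ eun ξ := Real.sqrt_nonneg _

lemma eun_eq (ξ : Eu m) : eun ξ = ‖WithLp.toLp 2 ξ‖ := by
  rw [EuclideanSpace.norm_eq]
  simp [eun]

lemma eun_smul (r : ℝ) (hr : 0 ≤ r) (ξ : Eu m) : eun (r • ξ) = r * eun ξ := by
  rw [eun_eq, eun_eq, WithLp.toLp_smul, norm_smul, Real.norm_of_nonneg hr]

lemma eun_sub_le (ξ η : Eu m) : eun (ξ - η) ≤ eun ξ + eun η := by
  rw [eun_eq, eun_eq, eun_eq, WithLp.toLp_sub]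
  exact norm_sub_le _ _

lemma eun_init_le (ξ : Eu (m + 1)) : eun (Fin.init ξ : Eu m) ≤ eun ξ := by
  unfold eun
  apply Real.sqrt_le_sqrt
  rw [Fin.sum_univ_castSucc]
  simp only [Fin.init]
  nlinarith [sq_nonneg (ξ (Fin.last m))]

lemma rpow_neg_nat (j : ℕ) : (2 : ℝ) ^ (-(j : ℝ)) = ((2 : ℝ) ^ j)⁻¹ := by
  rw [Real.rpow_neg (by norm_num), Real.rpow_natCast]

lemma cutS_apply (hΦ : IsLP Ψ Φ) (j : ℕ) (ξ : Eu m) :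
    cutS (Φ 0) j ξ = (Ψ (((2 : ℝ) ^ j)⁻¹ * eun ξ) : ℂ) := by
  change Φ 0 (((2 : ℝ) ^ j)⁻¹ • ξ) = _
  rw [hΦ 0]
  simp [LPsym, eun_smul (((2 : ℝ) ^ j)⁻¹) (by positivity)]

lemma Phi_zero (Φ : ℕ → 𝓢(Eu m, ℂ)) : Φ 0 = cutS (Φ 0) 0 := by
  ext ξ
  change _ = Φ 0 (((2 : ℝ) ^ 0)⁻¹ • ξ)
  simp

lemma Phi_succ (hΦ : IsLP Ψ Φ) (j : ℕ) : Φ (j + 1) = cutS (Φ 0) (j + 1) - cutS (Φ 0) j := by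
  ext ξ
  rw [sub_apply, cutS_apply hΦ, cutS_apply hΦ, hΦ (j + 1)]
  unfold LPsym
  rw [if_neg (by omega), rpow_neg_nat, show (1 : ℝ) - ((j + 1 : ℕ) : ℝ) = -(j : ℝ) by push_cast; ring,
    rpow_neg_nat]
  push_cast
  rfl

lemma cutS_eq_sum (hΦ : IsLP Ψ Φ) (j : ℕ) : cutS (Φ 0) j = ∑ k ∈ Finset.range (j + 1), Φ k := by
  induction j with
  | zero => simp [← Phi_zero]
  | succ j ih => rw [Finset.sum_range_succ, ← ih, Phi_succ hΦ]; abel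

lemma cutS_eq_one (hΨ : GoodPsi Ψ) (hΦ : IsLP Ψ Φ) (j : ℕ) (ξ : Eu m)
    (h : eun ξ ≤ 11 / 10 * 2 ^ j) : cutS (Φ 0) j ξ = 1 := by
  rw [cutS_apply hΦ, hΨ.2.1, Complex.ofReal_one]
  rw [inv_mul_le_iff₀ (by positivity)]
  linarith

lemma cutS_supp (hΨ : GoodPsi Ψ) (hΦ : IsLP Ψ Φ) (j : ℕ) (ξ : Eu m)
    (h : cutS (Φ 0) j ξ ≠ 0) : eun ξ ≤ 13 / 10 * 2 ^ j := by
  by_contra! hc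
  apply h
  rw [cutS_apply hΦ, hΨ.2.2, Complex.ofReal_zero]
  rw [le_inv_mul_iff₀ (by positivity)]
  linarith

lemma Phi_supp (hΨ : GoodPsi Ψ) (hΦ : IsLP Ψ Φ) (j : ℕ) (ξ : Eu m)
    (h : Φ j ξ ≠ 0) : eun ξ ≤ 13 / 10 * 2 ^ j := by
  cases j with
  | zero =>
    rw [Phi_zero Φ] at h
    exact cutS_supp hΨ hΦ 0 ξ h
  | succ j =>
    by_contra! hc
    apply h
    rw [Phi_succ hΦ, sub_apply]
    have h1 : cutS (Φ 0) (j + 1) ξ = 0 := by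
      by_contra h1
      exact absurd (cutS_supp hΨ hΦ (j + 1) ξ h1) (not_le.2 hc)
    have h2 : cutS (Φ 0) j ξ = 0 := by
      by_contra h1
      refine absurd (cutS_supp hΨ hΦ j ξ h1) (not_le.2 (lt_of_le_of_lt ?_ hc))
      gcongr <;> norm_num
    rw [h1, h2, sub_zero]

/-- Uniform bounds, with polynomial decay of any order, for the kernels of the cut-offs. -/
lemma cutK_bound (T : 𝓢(Eu m, ℂ)) (M : ℕ) : ∃ C : ℝ, 0 < C ∧ ∀ j x,
    ‖cutK T j x‖ ≤ C * (((2 : ℝ) ^ j) ^ m * ((1 + 2 ^ j * ‖x‖) ^ M)⁻¹) := by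
  obtain ⟨C, hC0, hC⟩ := schwartz_wt_bound M 0 (iftS m T)
  refine ⟨C + 1, by positivity, fun j x => ?_⟩
  have h := hC ((2 : ℝ) ^ j • x)
  rw [norm_iteratedFDeriv_zero, norm_smul, Real.norm_of_nonneg (by positivity)] at h
  rw [cutK_apply, norm_mul, ← mul_assoc, mul_comm (C + 1), mul_assoc]
  have h1 : ‖(((2 : ℝ) : ℂ) ^ j) ^ m‖ = ((2 : ℝ) ^ j) ^ m := by simp
  push_cast at h1 ⊢
  rw [h1]
  gcongr
  rw [← div_eq_mul_inv, le_div_iff₀ (by positivity), mul_comm]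
  linarith

/-- Uniform bounds for the Littlewood–Paley kernels. -/
lemma LPK_bound (hΦ : IsLP Ψ Φ) (M : ℕ) : ∃ C : ℝ, 0 < C ∧ ∀ j x,
    ‖iftS m (Φ j) x‖ ≤ C * (((2 : ℝ) ^ j) ^ m * ((1 + 2 ^ j * ‖x‖) ^ M)⁻¹) := by
  obtain ⟨C, hC0, hC⟩ := cutK_bound (Φ 0) M
  refine ⟨C + C * 2 ^ M, by positivity, fun j x => ?_⟩
  cases j with
  | zero =>
    have h : iftS m (Φ 0) x = cutK (Φ 0) 0 x := by rw [cutK, ← Phi_zero]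
    rw [h]
    refine (hC 0 x).trans ?_
    gcongr
    have : 0 ≤ C * 2 ^ M := by positivity
    linarith
  | succ j =>
    have h : iftS m (Φ (j + 1)) x = cutK (Φ 0) (j + 1) x - cutK (Φ 0) j x := by
      rw [Phi_succ hΦ, map_sub]; rfl
    rw [h, add_mul]
    refine (norm_sub_le _ _).trans (add_le_add (hC _ _) ((hC _ _).trans ?_))
    rw [mul_assoc]
    have e1 : ((2 : ℝ) ^ j) ^ m ≤ ((2 : ℝ) ^ (j + 1)) ^ m := by
      gcongr <;> norm_num
    have e2 : ((1 + 2 ^ j * ‖x‖) ^ M)⁻¹ ≤ (2 : ℝ) ^ M * ((1 + 2 ^ (j + 1) * ‖x‖) ^ M)⁻¹ := by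
      rw [← div_eq_mul_inv, le_div_iff₀ (by positivity), inv_mul_le_iff₀ (by positivity), ← mul_pow]
      gcongr
      rw [pow_succ]
      nlinarith [norm_nonneg x]
    calc _ ≤ C * (((2 : ℝ) ^ (j + 1)) ^ m * ((2 : ℝ) ^ M * ((1 + 2 ^ (j + 1) * ‖x‖) ^ M)⁻¹)) := by
          gcongr
      _ = _ := by ring

end LP

end

/-! ### Slices of the kernels and reproducing formulas -/

section

open scoped SchwartzMap

/-- A superposition of exponentials whose frequencies lie where `T(-·) = 1` is reproduced by the
kernel `ℱ⁻¹T`. -/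
lemma repro {X : Type} [MeasurableSpace X] {m : ℕ} (μ : Measure X) [SFinite μ] (l : X → Eu m)
    (hl : Measurable l) (c : X → ℂ) (hc : Integrable c μ) (T : 𝓢(Eu m, ℂ))
    (hT : ∀ ζ, c ζ ≠ 0 → T (-l ζ) = 1) (y0 : Eu m) :
    ∫ y, (∫ ζ, cexp (I * (dotp y (l ζ) : ℂ)) * c ζ ∂μ) * iftS m T (y - y0) =
      ∫ ζ, cexp (I * (dotp y0 (l ζ) : ℂ)) * c ζ ∂μ := by
  have hθ : Integrable (fun y => iftS m T (y - y0)) := (iftS m T).integrable.comp_sub_right y0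
  have h_integ : Integrable (fun w : Eu m × X =>
      cexp (I * (dotp w.1 (l w.2) : ℂ)) * (iftS m T (w.1 - y0) * c w.2)) (volume.prod μ) := by
    refine (hθ.mul_prod hc).bdd_mul (c := 1) (Measurable.aestronglyMeasurable ?_)
      (Eventually.of_forall fun w => ?_)
    · have h1 : Measurable fun w : Eu m × X => dotp w.1 (l w.2) := by
        have := continuous_dotp.measurable.comp
          (measurable_fst.prodMk (hl.comp (measurable_snd (α := Eu m) (β := X))))
        exact this
      fun_prop
    · rw [norm_cexp_I]
  have hsw := integral_integral_swap (f := fun (y : Eu m) (ζ : X) =>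
    cexp (I * (dotp y (l ζ) : ℂ)) * (iftS m T (y - y0) * c ζ)) h_integ
  calc _ = ∫ y, ∫ ζ, cexp (I * (dotp y (l ζ) : ℂ)) * (iftS m T (y - y0) * c ζ) ∂μ := by
        congr 1
        ext y
        rw [← integral_mul_const]
        congr 1
        ext ζ
        ring
    _ = ∫ ζ, (∫ y, cexp (I * (dotp y (l ζ) : ℂ)) * (iftS m T (y - y0) * c ζ)) ∂μ := hsw
    _ = _ := by
        congr 1
        ext ζ
        by_cases h0 : c ζ = 0
        · simp [h0]
        have h1 := integral_sub_right_eq_self (μ := volume) (fun w : Eu m =>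
          cexp (I * (dotp (w + y0) (l ζ) : ℂ)) * (iftS m T w * c ζ)) y0
        simp only [sub_add_cancel] at h1
        rw [h1]
        have h2 := pF_iftS T (-l ζ)
        rw [hT ζ h0] at h2
        unfold pF at h2
        calc _ = ∫ x, (cexp (I * (dotp y0 (l ζ) : ℂ)) * c ζ) *
              (cexp (-(I * (dotp x (-l ζ) : ℂ))) * iftS m T x) := by
              congr 1
              ext x
              rw [dotp_neg_right, dotp_comm (x + y0), dotp_add_right, dotp_comm _ x, dotp_comm _ y0]
              push_cast
              rw [mul_add, Complex.exp_add, mul_neg, neg_neg]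
              ring
          _ = _ := by rw [integral_const_mul, h2, mul_one]

/-- The inclusion `y ↦ (y, 0)` of the hyperplane. -/
def snocL (m : ℕ) : Eu m →L[ℝ] Eu (m + 1) :=
  ContinuousLinearMap.pi fun i =>
    if h : (i : ℕ) < m then ContinuousLinearMap.proj (⟨i, h⟩ : Fin m) else 0

lemma snocL_apply {m : ℕ} (y : Eu m) : snocL m y = (Fin.snoc y 0 : Eu (m + 1)) := by
  ext i
  refine Fin.lastCases ?_ (fun i => ?_) i
  · simp [snocL]
  · simp [snocL]

lemma norm_init_le {m : ℕ} (x : Eu (m + 1)) : ‖(Fin.init x : Eu m)‖ ≤ ‖x‖ := by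
  rw [pi_norm_le_iff_of_nonneg (norm_nonneg _)]
  intro i
  exact norm_le_pi_norm x i.castSucc

lemma snocL_antilipschitz (m : ℕ) : AntilipschitzWith 1 (snocL m) := by
  refine ContinuousLinearMap.antilipschitz_of_bound _ fun y => ?_
  rw [snocL_apply, NNReal.coe_one, one_mul]
  have := norm_init_le (Fin.snoc y 0 : Eu (m + 1))
  rwa [Fin.init_snoc] at this

/-- Restriction of Schwartz functions to the hyperplane. -/
def restrS (m : ℕ) : 𝓢(Eu (m + 1), ℂ) →L[ℂ] 𝓢(Eu m, ℂ) :=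
  SchwartzMap.compCLMOfAntilipschitz ℂ (snocL m).hasTemperateGrowth (snocL_antilipschitz m)

@[simp] lemma restrS_apply {m : ℕ} (φ : 𝓢(Eu (m + 1), ℂ)) (y : Eu m) :
    restrS m φ y = φ (Fin.snoc y 0) := by
  rw [← snocL_apply]; rfl

lemma dotp_snoc_zero {m : ℕ} (y : Eu m) (ξ : Eu (m + 1)) :
    dotp (Fin.snoc y 0 : Eu (m + 1)) ξ = dotp y (Fin.init ξ) := by
  unfold dotp
  rw [Fin.sum_univ_castSucc]
  simp [Fin.init]

/-- The slice `y ↦ K_j(x - (y, 0))`, `K_j` being the Littlewood–Paley kernel. -/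
def slK {m : ℕ} (Φ : 𝓢(Eu (m + 1), ℂ)) (x : Eu (m + 1)) : 𝓢(Eu m, ℂ) :=
  restrS m (kt (iftS (m + 1) Φ) x)

lemma slK_apply {m : ℕ} (Φ : 𝓢(Eu (m + 1), ℂ)) (x : Eu (m + 1)) (y : Eu m) :
    slK Φ x y = iftS (m + 1) Φ (x - Fin.snoc y 0) := by
  simp [slK]

/-- The density of frequencies of `slK`. -/
def slC {m : ℕ} (Φ : 𝓢(Eu (m + 1), ℂ)) (x ξ : Eu (m + 1)) : ℂ :=
  (((2 * Real.pi) ^ (m + 1) : ℝ)⁻¹ : ℂ) * (cexp (I * (dotp x ξ : ℂ)) * Φ ξ)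

lemma slC_integrable {m : ℕ} (Φ : 𝓢(Eu (m + 1), ℂ)) (x : Eu (m + 1)) : Integrable (slC Φ x) := by
  refine Integrable.const_mul ?_ _
  refine Φ.integrable.bdd_mul (c := 1) (Continuous.aestronglyMeasurable ?_)
    (Eventually.of_forall fun w => (norm_cexp_I _).le)
  have h1 : Continuous fun w : Eu (m + 1) => dotp x w := by unfold dotp; fun_prop
  fun_prop

lemma slK_eq {m : ℕ} (Φ : 𝓢(Eu (m + 1), ℂ)) (x : Eu (m + 1)) (y : Eu m) :
    slK Φ x y = ∫ ξ, cexp (I * (dotp y (-Fin.init ξ : Eu m) : ℂ)) * slC Φ x ξ := by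
  rw [slK_apply, iftS_apply]
  unfold pFinv slC
  rw [Complex.real_smul, ← integral_const_mul]
  congr 1
  ext ξ
  rw [dotp_sub_left, dotp_snoc_zero, dotp_neg_right]
  push_cast
  rw [mul_sub, mul_neg, sub_eq_add_neg, Complex.exp_add]
  ring

lemma measurable_neg_init (m : ℕ) : Measurable fun ξ : Eu (m + 1) => (-Fin.init ξ : Eu m) := by
  have : Continuous fun ξ : Eu (m + 1) => (-Fin.init ξ : Eu m) := by
    refine continuous_pi fun i => ?_
    simp only [Pi.neg_apply, Fin.init]
    fun_prop
  exact this.measurable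

/-- First reproducing formula: the cut-off kernel reproduces the slice. -/
lemma slK_repro {m : ℕ} (Φ : 𝓢(Eu (m + 1), ℂ)) (T : 𝓢(Eu m, ℂ))
    (hT : ∀ ξ, Φ ξ ≠ 0 → T (Fin.init ξ) = 1) (x : Eu (m + 1)) (z : Eu m) :
    slK Φ x z = ∫ y, slK Φ x y * iftS m T (y - z) := by
  have h := repro volume (fun ξ : Eu (m + 1) => (-Fin.init ξ : Eu m)) (measurable_neg_init m)
    (slC Φ x) (slC_integrable Φ x) T (fun ξ h => by
      rw [neg_neg]
      refine hT ξ fun h0 => h ?_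
      simp [slC, h0]) z
  simp_rw [← slK_eq] at h
  exact h.symm

/-- Second reproducing formula: a cut-off kernel of slightly larger frequency reproduces the
product of the slice with a translate of another kernel. -/
lemma slK_mul_repro {m : ℕ} (Φ : 𝓢(Eu (m + 1), ℂ)) (S T : 𝓢(Eu m, ℂ))
    (hT : ∀ ξ η, Φ ξ ≠ 0 → S η ≠ 0 → T (Fin.init ξ - η) = 1) (x : Eu (m + 1)) (z y0 : Eu m) :
    slK Φ x y0 * iftS m S (y0 - z) =
      ∫ y, (slK Φ x y * iftS m S (y - z)) * iftS m T (y - y0) := by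
  let d : Eu m → ℂ := fun η => (((2 * Real.pi) ^ m : ℝ)⁻¹ : ℂ) *
    (cexp (I * (dotp z (-η) : ℂ)) * S η)
  have hd : Integrable d := by
    refine Integrable.const_mul ?_ _
    refine S.integrable.bdd_mul (c := 1) (Continuous.aestronglyMeasurable ?_)
      (Eventually.of_forall fun w => (norm_cexp_I _).le)
    have h1 : Continuous fun w : Eu m => dotp z (-w) := by unfold dotp; fun_prop
    fun_prop
  have hS : ∀ y, iftS m S (y - z) = ∫ η, cexp (I * (dotp y η : ℂ)) * d η := by
    intro y
    rw [iftS_apply]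
    unfold pFinv
    rw [Complex.real_smul, ← integral_const_mul]
    congr 1
    ext η
    simp only [d]
    rw [dotp_sub_left, dotp_neg_right]
    push_cast
    rw [mul_sub, sub_eq_add_neg, Complex.exp_add, mul_neg]
    ring
  have hprod : ∀ y, slK Φ x y * iftS m S (y - z) =
      ∫ w : Eu (m + 1) × Eu m, cexp (I * (dotp y (-Fin.init w.1 + w.2 : Eu m) : ℂ)) *
        (slC Φ x w.1 * d w.2) ∂(volume.prod volume) := by
    intro y
    rw [slK_eq, hS, ← integral_prod_mul]
    congr 1
    ext w
    rw [dotp_add_right]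
    push_cast
    rw [mul_add, Complex.exp_add]
    ring
  have h := repro (volume.prod volume) (fun w : Eu (m + 1) × Eu m => (-Fin.init w.1 + w.2 : Eu m))
    (((measurable_neg_init m).comp measurable_fst).add measurable_snd)
    (fun w => slC Φ x w.1 * d w.2) ((slC_integrable Φ x).mul_prod hd) T (fun w h => by
      rw [neg_add, neg_neg, ← sub_eq_add_neg]
      refine hT w.1 w.2 (fun h0 => h ?_) (fun h0 => h ?_)
      · simp [slC, h0]
      · simp [d, h0]) y0
  simp_rw [← hprod] at h
  exact h.symm

end

/-! ### Weights and integral inequalities on hyperplanes -/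

section

set_option linter.unusedSectionVars false
open scoped SchwartzMap

/-- The weight `2^{jd} (1 + 2^j |v|)^{-M}`. -/
def wgt {E : Type} [NormedAddCommGroup E] (d M j : ℕ) (v : E) : ℝ≥0∞ :=
  ENNReal.ofReal (((2 : ℝ) ^ j) ^ d) * ENNReal.ofReal (((1 + 2 ^ j * ‖v‖) ^ M)⁻¹)

/-- The power `2^{jd}` in `ℝ≥0∞`. -/
def Pw (d j : ℕ) : ℝ≥0∞ := ENNReal.ofReal (((2 : ℝ) ^ j) ^ d)

lemma Pw_ne_zero (d j : ℕ) : Pw d j ≠ 0 := by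
  unfold Pw; rw [Ne, ENNReal.ofReal_eq_zero, not_le]; positivity

lemma Pw_ne_top (d j : ℕ) : Pw d j ≠ ∞ := ENNReal.ofReal_ne_top

lemma Pw_add (d j k : ℕ) : Pw d (j + k) = Pw d j * Pw d k := by
  unfold Pw
  rw [← ENNReal.ofReal_mul (by positivity), ← mul_pow, ← pow_add]

section wgt

variable {E : Type} [NormedAddCommGroup E]

lemma wgt_ne_top (d M j : ℕ) (v : E) : wgt d M j v ≠ ∞ :=
  ENNReal.mul_ne_top ENNReal.ofReal_ne_top ENNReal.ofReal_ne_top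

lemma wgt_le (d M j : ℕ) (v : E) : wgt d M j v ≤ Pw d j := by
  unfold wgt Pw
  refine mul_le_of_le_one_right' ?_
  rw [ENNReal.ofReal_le_one]
  exact inv_le_one_of_one_le₀ (one_le_pow₀ (by
    have : 0 ≤ (2 : ℝ) ^ j * ‖v‖ := by positivity
    linarith))

variable [NormedSpace ℝ E] [FiniteDimensional ℝ E] [MeasureSpace E] [BorelSpace E]

lemma measurable_wgt (d M j : ℕ) : Measurable (wgt d M j : E → ℝ≥0∞) := by
  unfold wgt
  fun_prop

variable [(volume : Measure E).IsAddHaarMeasure]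

lemma lintegral_comp_two_pow (j : ℕ) (f : E → ℝ≥0∞) (hf : Measurable f) :
    ∫⁻ v, f ((2 : ℝ) ^ j • v) = (Pw (Module.finrank ℝ E) j)⁻¹ * ∫⁻ v, f v := by
  have h2 : ((2 : ℝ) ^ j) ≠ 0 := by positivity
  have h := lintegral_map (μ := (volume : Measure E)) hf (measurable_const_smul ((2 : ℝ) ^ j))
  rw [Measure.map_addHaar_smul _ h2, lintegral_smul_measure] at h
  rw [← h, abs_of_pos (by positivity), ENNReal.ofReal_inv_of_pos (by positivity)]
  rfl

/-- Integrals of powers of the weights. -/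
lemma wgt_lintegral (M : ℕ) (r : ℝ) (hr : 0 < r) (hM : (Module.finrank ℝ E : ℝ) < M * r) :
    ∃ A : ℝ≥0∞, A ≠ ∞ ∧ ∀ j, ∫⁻ v : E, (wgt (Module.finrank ℝ E) M j v) ^ r =
      A * (Pw (Module.finrank ℝ E) j) ^ (r - 1) := by
  refine ⟨∫⁻ v : E, ENNReal.ofReal ((1 + ‖v‖) ^ (-(M * r))),
    (finite_integral_one_add_norm hM).ne, fun j => ?_⟩
  have h1 : ∀ v : E, (wgt (Module.finrank ℝ E) M j v) ^ r = (Pw (Module.finrank ℝ E) j) ^ r *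
      ENNReal.ofReal ((1 + ‖(2 : ℝ) ^ j • v‖) ^ (-(M * r))) := by
    intro v
    unfold wgt
    rw [ENNReal.mul_rpow_of_nonneg _ _ hr.le, ENNReal.ofReal_rpow_of_nonneg (x := (_ : ℝ)⁻¹)
      (by positivity) hr.le, norm_smul, Real.norm_of_nonneg (by positivity : (0 : ℝ) ≤ 2 ^ j)]
    congr 2
    rw [Real.rpow_neg (by positivity), Real.inv_rpow (by positivity), ← Real.rpow_natCast,
      ← Real.rpow_mul (by positivity)]
  simp_rw [h1]
  rw [lintegral_const_mul _ (by fun_prop), lintegral_comp_two_pow j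
    (fun v => ENNReal.ofReal ((1 + ‖v‖) ^ (-(M * r)))) (by fun_prop),
    ENNReal.rpow_sub _ _ (Pw_ne_zero _ _) (Pw_ne_top _ _), ENNReal.rpow_one, div_eq_mul_inv]
  ring

end wgt

section slice

variable {m : ℕ}

/-- Hölder's inequality with respect to the measure `W dy`. -/
lemma holder_pt (W G : Eu m → ℝ≥0∞) (hW : Measurable W) (hG : Measurable G)
    (r : ℝ) (hr : 1 ≤ r) :
    (∫⁻ y, W y * G y) ^ r ≤ (∫⁻ y, W y) ^ (r - 1) * ∫⁻ y, W y * G y ^ r := by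
  have hr0 : 0 < r := by linarith
  have hinv : r⁻¹ ≤ 1 := inv_le_one_of_one_le₀ hr
  have h := ENNReal.lintegral_mul_norm_pow_le (μ := (volume : Measure (Eu m))) hW.aemeasurable
    (hW.mul (hG.pow_const r)).aemeasurable (p := 1 - r⁻¹) (q := r⁻¹) (by linarith) (by positivity)
    (by ring)
  have e : ∀ y, W y ^ (1 - r⁻¹) * (W y * G y ^ r) ^ r⁻¹ = W y * G y := by
    intro y
    rw [ENNReal.mul_rpow_of_nonneg _ _ (by positivity), ← mul_assoc,
      ← ENNReal.rpow_add_of_nonneg _ _ (by linarith) (by positivity), sub_add_cancel,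
      ENNReal.rpow_one, ← ENNReal.rpow_mul, mul_inv_cancel₀ hr0.ne', ENNReal.rpow_one]
  simp only [Pi.mul_apply] at h
  simp_rw [e] at h
  calc _ ≤ ((∫⁻ y, W y) ^ (1 - r⁻¹) * (∫⁻ y, W y * G y ^ r) ^ r⁻¹) ^ r := by gcongr
    _ = _ := by
      rw [ENNReal.mul_rpow_of_nonneg _ _ hr0.le, ← ENNReal.rpow_mul, ← ENNReal.rpow_mul,
        inv_mul_cancel₀ hr0.ne', ENNReal.rpow_one, sub_mul, inv_mul_cancel₀ hr0.ne', one_mul]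

/-- If `|h| ≤ B ‖h‖₁ < ∞`, then `‖h‖₁^r ≤ B^{1-r} ‖h‖_r^r` for `r ≤ 1`. -/
lemma nikolskii_pt (h : Eu m → ℝ≥0∞) (hm : Measurable h) (B : ℝ≥0∞)
    (r : ℝ) (hr0 : 0 < r) (hr : r ≤ 1) (hfin : ∫⁻ y, h y ≠ ∞)
    (hB : ∀ y, h y ≤ B * ∫⁻ y, h y) :
    (∫⁻ y, h y) ^ r ≤ B ^ (1 - r) * ∫⁻ y, h y ^ r := by
  set A := ∫⁻ y, h y with hA
  by_cases h0 : A = 0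
  · rw [h0, ENNReal.zero_rpow_of_pos hr0]; exact zero_le
  have h1 : A ≤ (B * A) ^ (1 - r) * ∫⁻ y, h y ^ r := by
    rw [← lintegral_const_mul _ (hm.pow_const r), hA]
    refine lintegral_mono fun y => ?_
    calc h y = h y ^ (1 - r) * h y ^ r := by
          rw [← ENNReal.rpow_add_of_nonneg _ _ (by linarith) hr0.le, sub_add_cancel, ENNReal.rpow_one]
      _ ≤ _ := mul_le_mul_left (ENNReal.rpow_le_rpow (hB y) (by linarith)) _
  rw [ENNReal.mul_rpow_of_nonneg _ _ (by linarith), mul_comm (B ^ _), mul_assoc] at h1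
  have h2 : A ^ (1 - r) ≠ 0 := by
    rw [Ne, ENNReal.rpow_eq_zero_iff]
    rintro (⟨h, -⟩ | ⟨h, -⟩)
    · exact h0 h
    · exact hfin h
  have h3 : A ^ (1 - r) ≠ ∞ := ENNReal.rpow_ne_top_of_nonneg (by linarith) hfin
  have h4 : A = A ^ (1 - r) * A ^ r := by
    rw [← ENNReal.rpow_add_of_nonneg _ _ (by linarith) hr0.le, sub_add_cancel, ENNReal.rpow_one]
  have h5 : A ^ (1 - r) * A ^ r ≤ A ^ (1 - r) * (B ^ (1 - r) * ∫⁻ y, h y ^ r) := h4 ▸ h1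
  rwa [ENNReal.mul_le_mul_iff_right h2 h3] at h5

lemma young_lintegral (W G : Eu m → ℝ≥0∞) (hW : Measurable W) (hG : Measurable G) :
    ∫⁻ x, ∫⁻ y, W (x - y) * G y = (∫⁻ v, W v) * ∫⁻ y, G y := by
  rw [lintegral_lintegral_swap]
  · have : ∀ y : Eu m, ∫⁻ x : Eu m, W (x - y) * G y = (∫⁻ v, W v) * G y := by
      intro y
      rw [lintegral_mul_const _ (by fun_prop), lintegral_sub_right_eq_self]
    simp_rw [this]
    rw [lintegral_const_mul _ hG]
  · refine Measurable.aemeasurable ?_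
    exact (hW.comp (measurable_fst.sub measurable_snd)).mul (hG.comp measurable_snd)

/-- The abstract slice estimate: `H` is dominated by the integral of `h_x`, `h_x` is dominated by
a weight times `G`, and `h_x` satisfies a Nikolskii-type inequality. -/
lemma slice_abstract (M : ℕ) (r : ℝ) (hr : 0 < r) (hM : (m : ℝ) < M) (hMr : (m : ℝ) < M * r)
    (C₁ : ℝ≥0∞) (hC₁ : C₁ ≠ ∞) :
    ∃ C : ℝ≥0∞, C ≠ ∞ ∧ ∀ (j : ℕ) (V : ℝ≥0∞) (H : Eu m → ℝ≥0∞) (h : Eu m → Eu m → ℝ≥0∞)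
      (G : Eu m → ℝ≥0∞), Measurable G → (∀ x, Measurable (h x)) →
      (∀ x, H x ≤ ∫⁻ y, h x y) → (∀ x, ∫⁻ y, h x y ≠ ∞) →
      (∀ x y, h x y ≤ C₁ * Pw m j * ∫⁻ y, h x y) →
      (∀ x y, h x y ≤ V * (wgt m M j (x - y) * G y)) →
      ∫⁻ x, H x ^ r ≤ C * V ^ r * ∫⁻ y, G y ^ r := by
  have hfr : Module.finrank ℝ (Eu m) = m := Module.finrank_fin_fun ℝ
  obtain ⟨A, hA, hAe⟩ := wgt_lintegral (E := Eu m) M r hr (by rwa [hfr])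
  obtain ⟨A', hA', hAe'⟩ := wgt_lintegral (E := Eu m) M 1 one_pos (by rwa [hfr, mul_one])
  rw [hfr] at hAe hAe'
  simp only [sub_self, ENNReal.rpow_zero, mul_one, ENNReal.rpow_one] at hAe'
  refine ⟨C₁ ^ |1 - r| * A + A' ^ |r - 1| * A', ?_, ?_⟩
  · refine ENNReal.add_ne_top.2 ⟨ENNReal.mul_ne_top ?_ hA, ENNReal.mul_ne_top ?_ hA'⟩
    · exact ENNReal.rpow_ne_top_of_nonneg (abs_nonneg _) hC₁
    · exact ENNReal.rpow_ne_top_of_nonneg (abs_nonneg _) hA'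
  intro j V H h G hG hh hH hfin hB hw
  have hwm := measurable_wgt (E := Eu m) m M j
  rcases le_total r 1 with hr1 | hr1
  · have hpt : ∀ x, H x ^ r ≤ ((C₁ * Pw m j) ^ (1 - r) * V ^ r) *
        ∫⁻ y, wgt m M j (x - y) ^ r * G y ^ r := by
      intro x
      calc H x ^ r ≤ (∫⁻ y, h x y) ^ r := by gcongr; exact hH x
        _ ≤ (C₁ * Pw m j) ^ (1 - r) * ∫⁻ y, h x y ^ r :=
            nikolskii_pt _ (hh x) _ r hr hr1 (hfin x) (hB x)
        _ ≤ (C₁ * Pw m j) ^ (1 - r) * ∫⁻ y, V ^ r * (wgt m M j (x - y) ^ r * G y ^ r) := by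
            gcongr with y
            rw [← ENNReal.mul_rpow_of_nonneg _ _ hr.le, ← ENNReal.mul_rpow_of_nonneg _ _ hr.le]
            gcongr
            exact hw x y
        _ = _ := by
            rw [lintegral_const_mul _ (by fun_prop), mul_assoc]
    calc _ ≤ ∫⁻ x, ((C₁ * Pw m j) ^ (1 - r) * V ^ r) *
        ∫⁻ y, wgt m M j (x - y) ^ r * G y ^ r := lintegral_mono hpt
      _ ≤ ((C₁ * Pw m j) ^ (1 - r) * V ^ r) * ((A * Pw m j ^ (r - 1)) * ∫⁻ y, G y ^ r) := by
        rw [lintegral_const_mul]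
        · rw [young_lintegral (fun v => wgt m M j v ^ r) (fun y => G y ^ r) (by fun_prop)
            (by fun_prop), hAe]
        · refine Measurable.lintegral_prod_right' (f := fun w : Eu m × Eu m =>
            wgt m M j (w.1 - w.2) ^ r * G w.2 ^ r) ?_
          exact ((hwm.comp (measurable_fst.sub measurable_snd)).pow_const r).mul
            ((hG.comp measurable_snd).pow_const r)
      _ = (C₁ ^ (1 - r) * A * (Pw m j ^ (1 - r) * Pw m j ^ (r - 1))) * V ^ r * ∫⁻ y, G y ^ r := by
        rw [ENNReal.mul_rpow_of_nonneg _ _ (by linarith)]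
        ring
      _ = (C₁ ^ (1 - r) * A) * V ^ r * ∫⁻ y, G y ^ r := by
        rw [← ENNReal.rpow_add _ _ (Pw_ne_zero _ _) (Pw_ne_top _ _)]
        simp
      _ ≤ _ := by
        rw [abs_of_nonneg (by linarith : 0 ≤ 1 - r)]
        gcongr
        exact le_self_add
  · have hpt : ∀ x, H x ^ r ≤ (V ^ r * A' ^ (r - 1)) *
        ∫⁻ y, wgt m M j (x - y) * G y ^ r := by
      intro x
      calc H x ^ r ≤ (∫⁻ y, V * (wgt m M j (x - y) * G y)) ^ r := by
            gcongr
            exact (hH x).trans (lintegral_mono fun y => hw x y)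
        _ = V ^ r * (∫⁻ y, wgt m M j (x - y) * G y) ^ r := by
            rw [lintegral_const_mul _ (by fun_prop), ENNReal.mul_rpow_of_nonneg _ _ hr.le]
        _ ≤ V ^ r * ((∫⁻ y, wgt m M j (x - y)) ^ (r - 1) *
              ∫⁻ y, wgt m M j (x - y) * G y ^ r) := by
            gcongr
            exact holder_pt _ _ (by fun_prop) hG r hr1
        _ = _ := by
            rw [lintegral_sub_left_eq_self (fun v => wgt m M j v), hAe', mul_assoc]
    calc _ ≤ ∫⁻ x, (V ^ r * A' ^ (r - 1)) *
        ∫⁻ y, wgt m M j (x - y) * G y ^ r := lintegral_mono hpt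
      _ ≤ (V ^ r * A' ^ (r - 1)) * (A' * ∫⁻ y, G y ^ r) := by
        rw [lintegral_const_mul]
        · rw [young_lintegral (fun v => wgt m M j v) (fun y => G y ^ r) (by fun_prop)
            (by fun_prop), hAe']
        · refine Measurable.lintegral_prod_right' (f := fun w : Eu m × Eu m =>
            wgt m M j (w.1 - w.2) * G w.2 ^ r) ?_
          exact (hwm.comp (measurable_fst.sub measurable_snd)).mul
            ((hG.comp measurable_snd).pow_const r)
      _ = (A' ^ (r - 1) * A') * V ^ r * ∫⁻ y, G y ^ r := by ring
      _ ≤ _ := by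
        rw [abs_of_nonneg (by linarith : 0 ≤ r - 1)]
        gcongr
        exact le_add_self

end slice

end

/-! ### The pieces of `f ⊗ δ₀` on hyperplanes -/

section

set_option linter.unusedSectionVars false
open scoped SchwartzMap

variable {Ψ : ℝ → ℝ} {m : ℕ} {Φn : ℕ → 𝓢(Eu (m + 1), ℂ)} {Φm : ℕ → 𝓢(Eu m, ℂ)}

/-- The low-frequency part `∑_{k ≤ j+1} f_k` of `f`, as a function. -/
def lowP (Φm : ℕ → 𝓢(Eu m, ℂ)) (f : TD m) (j : ℕ) (y : Eu m) : ℂ :=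
  f (kt (cutK (Φm 0) (j + 1)) y)

lemma kt_sum {ι : Type} (S : Finset ι) (κ : ι → 𝓢(Eu m, ℂ)) (y : Eu m) :
    kt (∑ k ∈ S, κ k) y = ∑ k ∈ S, kt (κ k) y := by
  ext z
  simp only [kt_apply, sum_apply]

lemma lowP_eq_sum (hΦ : IsLP Ψ Φm) (f : TD m) (j : ℕ) (y : Eu m) :
    lowP Φm f j y = ∑ k ∈ Finset.range (j + 2), LPfun (Φm k) f y := by
  unfold lowP cutK
  rw [cutS_eq_sum hΦ, map_sum, kt_sum, map_sum]
  simp_rw [LPfun_eq]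

lemma lowP_continuous (f : TD m) (j : ℕ) : Continuous (lowP Φm f j) :=
  TD_kt_continuous f _

/-- `F_j(x)` as an integral over the hyperplane. -/
lemma slice_int (hΨ : GoodPsi Ψ) (hΦn : IsLP Ψ Φn) (hΦm : IsLP Ψ Φm) (f : TD m) (j : ℕ)
    (x : Eu (m + 1)) :
    Integrable (fun y => slK (Φn j) x y * lowP Φm f j y) ∧
      f (slK (Φn j) x) = ∫ y, slK (Φn j) x y * lowP Φm f j y := by
  refine TD_kt f (cutK (Φm 0) (j + 1)) (slK (Φn j) x) (slK (Φn j) x) fun z => ?_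
  refine slK_repro (Φn j) (cutS (Φm 0) (j + 1)) (fun ξ h => ?_) x z
  refine cutS_eq_one hΨ hΦm _ _ ?_
  have h1 := Phi_supp hΨ hΦn j ξ h
  have h2 := eun_init_le ξ
  have h3 : (0 : ℝ) < 2 ^ j := by positivity
  rw [pow_succ]
  linarith

/-- The integrand is band-limited, hence pointwise bounded by its own mean. -/
lemma slice_nik (hΨ : GoodPsi Ψ) (hΦn : IsLP Ψ Φn) (hΦm : IsLP Ψ Φm) :
    ∃ C : ℝ≥0∞, C ≠ ∞ ∧ ∀ (f : TD m) (j : ℕ) (x : Eu (m + 1)) (y0 : Eu m),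
      ‖slK (Φn j) x y0 * lowP Φm f j y0‖ₑ ≤
        C * Pw m j * ∫⁻ y, ‖slK (Φn j) x y * lowP Φm f j y‖ₑ := by
  obtain ⟨C, hC0, hC⟩ := cutK_bound (Φm 0) 0
  refine ⟨ENNReal.ofReal C * Pw m 2, ENNReal.mul_ne_top ENNReal.ofReal_ne_top (Pw_ne_top _ _),
    fun f j x y0 => ?_⟩
  obtain ⟨θ, hθ⟩ := exists_mul_schwartz (slK (Φn j) x)
    ((cutK (Φm 0) (j + 2)).compSubConstCLM ℂ y0)
  have hθ' : ∀ y, θ y = slK (Φn j) x y * cutK (Φm 0) (j + 2) (y - y0) := hθ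
  have h := (TD_kt f (cutK (Φm 0) (j + 1)) θ (slK (Φn j) x y0 • kt (cutK (Φm 0) (j + 1)) y0)
    fun z => ?_).2
  · rw [map_smul, smul_eq_mul] at h
    change slK (Φn j) x y0 * lowP Φm f j y0 = ∫ y, θ y * lowP Φm f j y at h
    rw [h]
    refine (enorm_integral_le_lintegral_enorm _).trans ?_
    rw [← lintegral_const_mul _ (by
      have := lowP_continuous (Φm := Φm) f j
      fun_prop)]
    refine lintegral_mono fun y => ?_
    rw [hθ', mul_right_comm, enorm_mul, mul_comm]
    gcongr
    rw [mul_assoc, ← Pw_add, add_comm 2 j]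
    rw [← ofReal_norm]
    unfold Pw
    rw [← ENNReal.ofReal_mul hC0.le]
    refine ENNReal.ofReal_le_ofReal ((hC _ _).trans (le_of_eq ?_))
    simp
  · rw [smul_apply, kt_apply, smul_eq_mul]
    have h2 := slK_mul_repro (Φn j) (cutS (Φm 0) (j + 1)) (cutS (Φm 0) (j + 2))
      (fun ξ η h h' => ?_) x z y0
    · refine h2.trans ?_
      congr 1
      ext y
      rw [hθ']
      unfold cutK
      ring
    · refine cutS_eq_one hΨ hΦm _ _ ?_
      have h1 := Phi_supp hΨ hΦn j ξ h
      have h2 := eun_init_le ξ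
      have h3 : (0 : ℝ) < 2 ^ j := by positivity
      have h4 := cutS_supp hΨ hΦm _ η h'
      have h5 := eun_sub_le (Fin.init ξ : Eu m) η
      rw [pow_succ] at h4
      rw [pow_succ, pow_succ]
      linarith

lemma abs_last_le (x : Eu (m + 1)) : |x (Fin.last m)| ≤ ‖x‖ := norm_le_pi_norm x (Fin.last m)

/-- The kernel decays in the tangential and in the normal direction. -/
lemma slice_ker (hΦn : IsLP Ψ Φn) (M : ℕ) :
    ∃ C : ℝ≥0∞, C ≠ ∞ ∧ ∀ (j : ℕ) (x' : Eu m) (t : ℝ) (y : Eu m),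
      ‖slK (Φn j) (Fin.snoc x' t) y‖ₑ ≤ C * wgt 1 M j t * wgt m M j (x' - y) := by
  obtain ⟨C, hC0, hC⟩ := LPK_bound hΦn (M + M)
  refine ⟨ENNReal.ofReal C, ENNReal.ofReal_ne_top, fun j x' t y => ?_⟩
  rw [slK_apply, ← ofReal_norm]
  unfold wgt
  rw [← ENNReal.ofReal_mul (by positivity), ← ENNReal.ofReal_mul (by positivity),
    ← ENNReal.ofReal_mul (by positivity), ← ENNReal.ofReal_mul (by positivity)]
  refine ENNReal.ofReal_le_ofReal ((hC _ _).trans ?_)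
  set v : Eu (m + 1) := Fin.snoc x' t - Fin.snoc y 0 with hv
  have h1 : ‖x' - y‖ ≤ ‖v‖ := by
    have := norm_init_le v
    have e : (Fin.init v : Eu m) = x' - y := by
      ext i
      simp [hv, Fin.init]
    rwa [e] at this
  have h2 : ‖t‖ ≤ ‖v‖ := by
    have := abs_last_le v
    simpa [hv] using this
  have h3 : ((1 + 2 ^ j * ‖v‖) ^ (M + M))⁻¹ ≤
      ((1 + 2 ^ j * ‖t‖) ^ M)⁻¹ * ((1 + 2 ^ j * ‖x' - y‖) ^ M)⁻¹ := by
    rw [← mul_inv, pow_add]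
    gcongr
  calc _ ≤ C * ((2 ^ j) ^ (m + 1) *
      (((1 + 2 ^ j * ‖t‖) ^ M)⁻¹ * ((1 + 2 ^ j * ‖x' - y‖) ^ M)⁻¹)) := by gcongr
    _ = _ := by ring

/-- The slice estimate for finite `p`. -/
lemma slice_lt (hΨ : GoodPsi Ψ) (hΦn : IsLP Ψ Φn) (hΦm : IsLP Ψ Φm) (M : ℕ) (r : ℝ) (hr : 0 < r)
    (hM : (m : ℝ) < M) (hMr : (m : ℝ) < M * r) :
    ∃ C : ℝ≥0∞, C ≠ ∞ ∧ ∀ (f : TD m) (j : ℕ) (t : ℝ),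
      ∫⁻ x' : Eu m, ‖f (slK (Φn j) (Fin.snoc x' t))‖ₑ ^ r ≤
        C * wgt 1 M j t ^ r * ∫⁻ y, ‖lowP Φm f j y‖ₑ ^ r := by
  obtain ⟨C₁, hC₁, h₁⟩ := slice_nik hΨ hΦn hΦm
  obtain ⟨C₂, hC₂, h₂⟩ := slice_ker (m := m) hΦn M
  obtain ⟨C₃, hC₃, h₃⟩ := slice_abstract (m := m) M r hr hM hMr C₁ hC₁
  refine ⟨C₃ * C₂ ^ r, ENNReal.mul_ne_top hC₃ (ENNReal.rpow_ne_top_of_nonneg hr.le hC₂),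
    fun f j t => ?_⟩
  have hg := lowP_continuous (Φm := Φm) f j
  refine (h₃ j (C₂ * wgt 1 M j t) _
    (fun x' y => ‖slK (Φn j) (Fin.snoc x' t) y * lowP Φm f j y‖ₑ)
    (fun y => ‖lowP Φm f j y‖ₑ) (by fun_prop) (fun x => by fun_prop)
    (fun x => ?_) (fun x => ?_) (fun x y => h₁ f j _ y) (fun x y => ?_)).trans (le_of_eq ?_)
  · rw [(slice_int hΨ hΦn hΦm f j (Fin.snoc x t)).2]
    exact enorm_integral_le_lintegral_enorm _
  · exact (slice_int hΨ hΦn hΦm f j (Fin.snoc x t)).1.2.ne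
  · rw [enorm_mul, ← mul_assoc]
    gcongr
    exact h₂ j x t y
  · rw [ENNReal.mul_rpow_of_nonneg _ _ hr.le]
    ring

/-- The slice estimate for `p = ∞`. -/
lemma slice_top (hΨ : GoodPsi Ψ) (hΦn : IsLP Ψ Φn) (hΦm : IsLP Ψ Φm) :
    ∃ C : ℝ≥0∞, C ≠ ∞ ∧ ∀ (f : TD m) (j : ℕ) (x : Eu (m + 1)),
      ‖f (slK (Φn j) x)‖ₑ ≤ C * Pw 1 j * eLpNorm (lowP Φm f j) ∞ volume := by
  obtain ⟨C₂, hC₂, h₂⟩ := slice_ker (m := m) hΦn (m + 1)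
  have hfr : Module.finrank ℝ (Eu m) = m := Module.finrank_fin_fun ℝ
  obtain ⟨A', hA', hAe'⟩ := wgt_lintegral (E := Eu m) (m + 1) 1 one_pos (by
    rw [hfr]; push_cast; linarith)
  rw [hfr] at hAe'
  simp only [sub_self, ENNReal.rpow_zero, mul_one, ENNReal.rpow_one] at hAe'
  refine ⟨C₂ * A', ENNReal.mul_ne_top hC₂ hA', fun f j x => ?_⟩
  have hx : x = Fin.snoc (Fin.init x : Eu m) (x (Fin.last m)) := (Fin.snoc_init_self x).symm
  set x' : Eu m := Fin.init x
  set t := x (Fin.last m)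
  have hwm := measurable_wgt (E := Eu m) m (m + 1) j
  rw [(slice_int hΨ hΦn hΦm f j x).2]
  refine (enorm_integral_le_lintegral_enorm _).trans ?_
  have hae : ∀ᵐ y, ‖lowP Φm f j y‖ₑ ≤ eLpNorm (lowP Φm f j) ∞ volume := by
    rw [eLpNorm_exponent_top]
    exact enorm_ae_le_eLpNormEssSup _ _
  calc _ ≤ ∫⁻ y, (C₂ * Pw 1 j * eLpNorm (lowP Φm f j) ∞ volume) * wgt m (m + 1) j (x' - y) := by
        refine lintegral_mono_ae (hae.mono fun y hy => ?_)
        rw [enorm_mul, mul_right_comm]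
        gcongr
        rw [hx]
        refine (h₂ j x' t y).trans ?_
        gcongr
        exact wgt_le _ _ _ _
    _ = _ := by
        rw [lintegral_const_mul _ (by fun_prop), lintegral_sub_left_eq_self (fun v => wgt m (m + 1) j v),
          hAe']
        ring

end

/-! ### Weighted sequence inequalities -/

section

set_option linter.unusedSectionVars false

lemma tw_ne_zero (a : ℝ) (j : ℕ) : tw a j ≠ 0 := by
  unfold tw; rw [Ne, ENNReal.ofReal_eq_zero, not_le]; positivity

lemma tw_ne_top (a : ℝ) (j : ℕ) : tw a j ≠ ∞ := ENNReal.ofReal_ne_top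

lemma tw_mul (a b : ℝ) (j : ℕ) : tw a j * tw b j = tw (a + b) j := by
  unfold tw
  rw [← ENNReal.ofReal_mul (by positivity), ← Real.rpow_add (by norm_num), add_mul]

lemma tw_add (a : ℝ) (j k : ℕ) : tw a (j + k) = tw a j * tw a k := by
  unfold tw
  rw [← ENNReal.ofReal_mul (by positivity), ← Real.rpow_add (by norm_num)]
  push_cast
  rw [mul_add]

lemma tw_rpow (a r : ℝ) (j : ℕ) : tw a j ^ r = tw (a * r) j := by
  unfold tw
  rw [ENNReal.ofReal_rpow_of_pos (by positivity), ← Real.rpow_mul (by norm_num)]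
  congr 2
  ring

lemma tw_zero (j : ℕ) : tw 0 j = 1 := by simp [tw]

lemma tw_inv (a : ℝ) (j : ℕ) : (tw a j)⁻¹ = tw (-a) j := by
  rw [← ENNReal.rpow_neg_one, tw_rpow]
  congr 1
  ring

lemma Pw_eq_tw (d j : ℕ) : Pw d j = tw d j := by
  unfold Pw tw
  rw [mul_comm, Real.rpow_mul (by norm_num), Real.rpow_natCast, Real.rpow_natCast]

lemma tw_eq_pow (a : ℝ) (j : ℕ) : tw a j = (tw a 1) ^ j := by
  induction j with
  | zero => simp [tw]
  | succ j ih => rw [tw_add, ih, pow_succ]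

lemma tw_le_one {a : ℝ} (ha : a ≤ 0) (j : ℕ) : tw a j ≤ 1 := by
  unfold tw
  rw [ENNReal.ofReal_le_one]
  exact Real.rpow_le_one_of_one_le_of_nonpos (by norm_num)
    (mul_nonpos_of_nonpos_of_nonneg ha (by positivity))

lemma tsum_tw_ne_top {a : ℝ} (ha : a < 0) : ∑' j, tw a j ≠ ∞ := by
  rw [tsum_congr (tw_eq_pow a)]
  rw [ENNReal.tsum_geometric, ENNReal.inv_ne_top]
  have : tw a 1 < 1 := by
    unfold tw
    rw [← ENNReal.ofReal_one, ENNReal.ofReal_lt_ofReal_iff (by norm_num)]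
    exact Real.rpow_lt_one_of_one_lt_of_neg (by norm_num) (by simpa using ha)
  exact (tsub_pos_of_lt this).ne'

/-- Convolution of sequences, with the index shift `k ≤ j + 1`. -/
lemma tsum_shift_conv (w c : ℕ → ℝ≥0∞) :
    ∑' j, ∑ k ∈ Finset.range (j + 2), w (j + 1 - k) * c k ≤ (∑' n, w n) * ∑' k, c k := by
  have h1 : ∀ j, ∑ k ∈ Finset.range (j + 2), w (j + 1 - k) * c k =
      ∑' k, (if k ≤ j + 1 then w (j + 1 - k) else 0) * c k := by
    intro j
    rw [tsum_eq_sum (s := Finset.range (j + 2))]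
    · refine Finset.sum_congr rfl fun k hk => ?_
      rw [if_pos (by have := Finset.mem_range.1 hk; omega)]
    · intro k hk
      rw [if_neg (by rw [Finset.mem_range] at hk; omega), zero_mul]
  simp_rw [h1]
  rw [ENNReal.tsum_comm, ← ENNReal.tsum_mul_left]
  refine ENNReal.tsum_le_tsum fun k => ?_
  rw [ENNReal.tsum_mul_right]
  refine mul_le_mul' ?_ le_rfl
  calc _ ≤ ∑' n, (if k ≤ n then w (n - k) else 0) :=
        ENNReal.tsum_comp_le_tsum_of_injective (f := fun j : ℕ => j + 1)
          (add_left_injective 1) (fun n => if k ≤ n then w (n - k) else 0)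
    _ = ∑' n, w n := by
        rw [← (add_left_injective k).tsum_eq]
        · simp
        · intro n hn
          rw [Function.mem_support] at hn
          have : k ≤ n := by
            by_contra h
            exact hn (if_neg h)
          exact ⟨n - k, by simp [this]⟩

/-- Hardy's inequality for the sums `∑_{k ≤ j+1}`: if `e_j^r ≤ ∑_{k ≤ j+1} b_k^r` and `σ < 0`, then
the weighted `ℓ_q`-norm of `e` is controlled by that of `b`. -/
lemma hardy (σ r : ℝ) (hσ : σ < 0) (hr : 0 < r) (q : ℝ≥0∞) (hq : 0 < q) :
    ∃ C : ℝ≥0∞, C ≠ ∞ ∧ ∀ b e : ℕ → ℝ≥0∞,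
      (∀ j, e j ^ r ≤ ∑ k ∈ Finset.range (j + 2), b k ^ r) →
      ellqNorm q (fun j => tw σ j * e j) ≤ C * ellqNorm q (fun k => tw σ k * b k) := by
  set Z : ℝ≥0∞ := ∑' n, tw (σ / 2 * r) n with hZ
  have hZt : Z ≠ ∞ := tsum_tw_ne_top (by nlinarith)
  -- One-index estimate, under a pointwise bound with half the decay.
  have key : ∀ (b e : ℕ → ℝ≥0∞), (∀ j, e j ^ r ≤ ∑ k ∈ Finset.range (j + 2), b k ^ r) →
      ∀ (j : ℕ) (D : ℝ≥0∞), (∀ k ≤ j + 1, tw σ k * b k ≤ tw (-(σ / 2)) (j + 1 - k) * D) →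
      tw σ j * e j ≤ tw (-σ) 1 * Z ^ r⁻¹ * D := by
    intro b e he j D hD
    have h1 : ∀ k ≤ j + 1, b k ≤ tw (-σ) (j + 1) * (tw (σ / 2) (j + 1 - k) * D) := by
      intro k hk
      have e1 : tw (-σ) (j + 1) = tw (-σ) k * tw (-σ) (j + 1 - k) := by
        rw [← tw_add]; congr 1; omega
      calc b k = tw (-σ) k * (tw σ k * b k) := by
            rw [← mul_assoc, tw_mul, neg_add_cancel, tw_zero, one_mul]
        _ ≤ tw (-σ) k * (tw (-(σ / 2)) (j + 1 - k) * D) := mul_le_mul' le_rfl (hD k hk)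
        _ = _ := by
            rw [e1, show -(σ / 2) = -σ + σ / 2 by ring, ← tw_mul]
            ring
    have h2 : e j ^ r ≤ (tw (-σ) (j + 1) * D) ^ r * Z := by
      refine (he j).trans ?_
      calc _ ≤ ∑ k ∈ Finset.range (j + 2), (tw (-σ) (j + 1) * D) ^ r * tw (σ / 2 * r) (j + 1 - k) := by
            refine Finset.sum_le_sum fun k hk => ?_
            rw [← tw_rpow, ← ENNReal.mul_rpow_of_nonneg _ _ hr.le]
            refine ENNReal.rpow_le_rpow ((h1 k (by have := Finset.mem_range.1 hk; omega)).trans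
              (le_of_eq (by ring))) hr.le
        _ ≤ _ := by
            rw [← Finset.mul_sum]
            gcongr
            have := Finset.sum_range_reflect (fun n => tw (σ / 2 * r) n) (j + 2)
            simp only [show ∀ k, j + 2 - 1 - k = j + 1 - k from fun k => by omega] at this
            rw [this]
            exact ENNReal.sum_le_tsum _
    have h3 : e j ≤ (tw (-σ) (j + 1) * D) * Z ^ r⁻¹ := by
      rw [← ENNReal.rpow_le_rpow_iff hr, ENNReal.mul_rpow_of_nonneg _ (Z ^ r⁻¹) hr.le,
        ← ENNReal.rpow_mul, inv_mul_cancel₀ hr.ne', ENNReal.rpow_one]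
      exact h2
    calc _ ≤ tw σ j * ((tw (-σ) (j + 1) * D) * Z ^ r⁻¹) := by gcongr
      _ = (tw σ j * tw (-σ) j) * (tw (-σ) 1 * Z ^ r⁻¹ * D) := by rw [tw_add]; ring
      _ = _ := by rw [tw_mul, add_neg_cancel, tw_zero, one_mul]
  have hC0 : tw (-σ) 1 * Z ^ r⁻¹ ≠ ∞ :=
    ENNReal.mul_ne_top (tw_ne_top _ _) (ENNReal.rpow_ne_top_of_nonneg (by positivity) hZt)
  by_cases hqt : q = ∞
  · refine ⟨_, hC0, fun b e he => ?_⟩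
    simp only [ellqNorm, if_pos hqt]
    refine iSup_le fun j => key b e he j _ fun k hk => ?_
    refine (le_iSup (fun k => tw σ k * b k) k).trans (le_mul_of_one_le_left' ?_)
    rw [← tw_inv, ENNReal.one_le_inv]
    exact tw_le_one (by linarith) _
  · have hq0 : 0 < q.toReal := ENNReal.toReal_pos hq.ne' hqt
    set Q := q.toReal
    set Z' : ℝ≥0∞ := ∑' n, tw (σ / 2 * Q) n with hZ'
    have hZt' : Z' ≠ ∞ := tsum_tw_ne_top (by nlinarith)
    refine ⟨tw (-σ) 1 * Z ^ r⁻¹ * Z' ^ (1 / Q),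
      ENNReal.mul_ne_top hC0 (ENNReal.rpow_ne_top_of_nonneg (by positivity) hZt'),
      fun b e he => ?_⟩
    simp only [ellqNorm, if_neg hqt]
    have h1 : ∀ j, (tw σ j * e j) ^ Q ≤ (tw (-σ) 1 * Z ^ r⁻¹) ^ Q *
        ∑ k ∈ Finset.range (j + 2), tw (σ / 2 * Q) (j + 1 - k) * (tw σ k * b k) ^ Q := by
      intro j
      set S := ∑ k ∈ Finset.range (j + 2), tw (σ / 2 * Q) (j + 1 - k) * (tw σ k * b k) ^ Q with hS
      have h2 := key b e he j (S ^ Q⁻¹) fun k hk => by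
        rw [← ENNReal.rpow_le_rpow_iff hq0, ENNReal.mul_rpow_of_nonneg _ (S ^ Q⁻¹) hq0.le,
          ← ENNReal.rpow_mul, inv_mul_cancel₀ hq0.ne', ENNReal.rpow_one, tw_rpow]
        have h3 : tw (σ / 2 * Q) (j + 1 - k) * (tw σ k * b k) ^ Q ≤ S :=
          Finset.single_le_sum (f := fun k => tw (σ / 2 * Q) (j + 1 - k) * (tw σ k * b k) ^ Q)
            (fun _ _ => bot_le) (Finset.mem_range.2 (by omega))
        calc _ = tw (-(σ / 2) * Q) (j + 1 - k) *
              (tw (σ / 2 * Q) (j + 1 - k) * (tw σ k * b k) ^ Q) := by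
              rw [← mul_assoc, tw_mul, show -(σ / 2) * Q + σ / 2 * Q = 0 by ring, tw_zero, one_mul]
          _ ≤ _ := by gcongr
      refine (ENNReal.rpow_le_rpow h2 hq0.le).trans (le_of_eq ?_)
      rw [ENNReal.mul_rpow_of_nonneg _ (S ^ Q⁻¹) hq0.le, ← ENNReal.rpow_mul S,
        inv_mul_cancel₀ hq0.ne', ENNReal.rpow_one]
    have h4 := (ENNReal.tsum_le_tsum h1).trans_eq ENNReal.tsum_mul_left
    have h5 := tsum_shift_conv (fun n => tw (σ / 2 * Q) n) (fun k => (tw σ k * b k) ^ Q)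
    calc _ ≤ ((tw (-σ) 1 * Z ^ r⁻¹) ^ Q * (Z' * ∑' k, (tw σ k * b k) ^ Q)) ^ (1 / Q) := by
          refine ENNReal.rpow_le_rpow (h4.trans ?_) (by positivity)
          gcongr
      _ = _ := by
          have h6 : (1 : ℝ) / Q = Q⁻¹ := one_div Q
          rw [h6, ENNReal.mul_rpow_of_nonneg _ _ (by positivity),
            ENNReal.mul_rpow_of_nonneg Z' _ (by positivity),
            ENNReal.rpow_rpow_inv hq0.ne', mul_assoc, mul_assoc, mul_assoc]

/-- Weighted comparison of `ℓ_q` and `ℓ_p` expressions: summable powers of inverse weights allow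
any change of the exponent. -/
lemma ellq_le_weighted (q : ℝ≥0∞) (hq : 0 < q) (P : ℝ) (hP : 0 < P) (K : ℝ≥0∞)
    (ρ a : ℕ → ℝ≥0∞) (hρ0 : ∀ j, ρ j ≠ 0) (hρt : ∀ j, ρ j ≠ ∞) (hK1 : ∀ j, (ρ j)⁻¹ ≤ K)
    (hK : q ≠ ∞ → (∑' j, (ρ j)⁻¹ ^ (q.toReal / P)) ^ (P / q.toReal) ≤ K) :
    ellqNorm q a ^ P ≤ K * ∑' j, ρ j * a j ^ P := by
  set S := ∑' j, ρ j * a j ^ P with hS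
  have h1 : ∀ j, a j ^ P ≤ (ρ j)⁻¹ * S := by
    intro j
    have h2 : ρ j * a j ^ P ≤ S := ENNReal.le_tsum j
    calc a j ^ P = (ρ j)⁻¹ * (ρ j * a j ^ P) := by
          rw [← mul_assoc, ENNReal.inv_mul_cancel (hρ0 j) (hρt j), one_mul]
      _ ≤ _ := by gcongr
  by_cases hqt : q = ∞
  · simp only [ellqNorm, if_pos hqt]
    have h2 : ⨆ j, a j ≤ (K * S) ^ P⁻¹ := iSup_le fun j => by
      rw [ENNReal.le_rpow_inv_iff hP]
      exact (h1 j).trans (by gcongr; exact hK1 j)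
    rwa [ENNReal.le_rpow_inv_iff hP] at h2
  · have hq0 : 0 < q.toReal := ENNReal.toReal_pos hq.ne' hqt
    have hK := hK hqt
    simp only [ellqNorm, if_neg hqt]
    set Q := q.toReal
    have h2 : ∑' j, a j ^ Q ≤ (∑' j, (ρ j)⁻¹ ^ (Q / P)) * S ^ (Q / P) := by
      rw [← ENNReal.tsum_mul_right]
      refine ENNReal.tsum_le_tsum fun j => ?_
      rw [← ENNReal.mul_rpow_of_nonneg _ _ (by positivity)]
      refine le_trans (le_of_eq ?_) (ENNReal.rpow_le_rpow (h1 j) (by positivity))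
      rw [← ENNReal.rpow_mul, mul_div_cancel₀ _ hP.ne']
    rw [← ENNReal.rpow_mul, one_div_mul_eq_div]
    refine (ENNReal.rpow_le_rpow h2 (by positivity)).trans ?_
    rw [ENNReal.mul_rpow_of_nonneg _ _ (by positivity), ← ENNReal.rpow_mul S,
      div_mul_div_cancel₀ hP.ne', div_self hq0.ne', ENNReal.rpow_one]
    gcongr

/-- The weight `|u|^{1/2} + |u|^{-1/2}`. -/
def rho (u : ℝ) : ℝ≥0∞ := ENNReal.ofReal (|u| ^ (1 / 2 : ℝ)) + ENNReal.ofReal (|u| ^ (-(1 / 2) : ℝ))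

lemma measurable_rho : Measurable rho := by
  unfold rho
  fun_prop

lemma rho_ne_top (u : ℝ) : rho u ≠ ∞ :=
  ENNReal.add_ne_top.2 ⟨ENNReal.ofReal_ne_top, ENNReal.ofReal_ne_top⟩

lemma rho_ne_zero {u : ℝ} (hu : u ≠ 0) : rho u ≠ 0 := by
  unfold rho
  have : 0 < |u| := abs_pos.2 hu
  intro h
  have h1 := (add_eq_zero.1 h).1
  rw [ENNReal.ofReal_eq_zero, ← not_lt] at h1
  exact h1 (by positivity)

lemma rho_inv_le {u : ℝ} {n : ℕ} (hu : u ≠ 0) (h : (2 : ℝ) ^ n ≤ |u| ∨ |u| ≤ ((2 : ℝ) ^ n)⁻¹) :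
    (rho u)⁻¹ ≤ tw (-(1 / 2)) n := by
  have hpos : 0 < |u| := abs_pos.2 hu
  rw [ENNReal.inv_le_iff_inv_le, tw_inv, neg_neg]
  have e : (2 : ℝ) ^ ((1 / 2 : ℝ) * n) = ((2 : ℝ) ^ n) ^ (1 / 2 : ℝ) := by
    rw [mul_comm, Real.rpow_mul (by norm_num), Real.rpow_natCast]
  unfold tw rho
  rw [e]
  rcases h with h | h
  · refine le_trans (ENNReal.ofReal_le_ofReal ?_) le_self_add
    gcongr
  · refine le_trans (ENNReal.ofReal_le_ofReal ?_) le_add_self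
    rw [Real.rpow_neg hpos.le, ← Real.inv_rpow hpos.le]
    have : (2 : ℝ) ^ n ≤ |u|⁻¹ := (le_inv_comm₀ (by positivity) hpos).2 h
    gcongr

/-- The dyadic scale `2^{-j0} ≈ |t|` (or `j0 = 0` if `|t| ≥ 1`) and the growth of `|2^j t|` away from
it. -/
lemma exists_scale {t : ℝ} (ht : t ≠ 0) : ∃ j0 : ℕ, (∀ j, j0 ≤ j → (2 : ℝ) ^ (j - j0) ≤ |2 ^ j * t|) ∧
    ∀ j, j < j0 → |2 ^ j * t| ≤ ((2 : ℝ) ^ (j0 - 1 - j))⁻¹ := by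
  have hpos : 0 < |t| := abs_pos.2 ht
  have hex : ∃ j : ℕ, 1 ≤ 2 ^ j * |t| := by
    obtain ⟨n, hn⟩ := pow_unbounded_of_one_lt |t|⁻¹ (one_lt_two (α := ℝ))
    refine ⟨n, ?_⟩
    rw [inv_lt_iff_one_lt_mul₀ hpos] at hn
    linarith
  obtain ⟨j0, hs, hm⟩ : ∃ j0 : ℕ, 1 ≤ 2 ^ j0 * |t| ∧ ∀ k < j0, ¬ 1 ≤ 2 ^ k * |t| := by
    classical
    exact ⟨Nat.find hex, Nat.find_spec hex, fun k hk => Nat.find_min hex hk⟩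
  have ha : ∀ j : ℕ, |2 ^ j * t| = 2 ^ j * |t| := fun j => by
    rw [abs_mul, abs_of_pos (by positivity)]
  refine ⟨j0, fun j hj => ?_, fun j hj => ?_⟩
  · rw [ha]
    calc (2 : ℝ) ^ (j - j0) = 2 ^ (j - j0) * 1 := (mul_one _).symm
      _ ≤ 2 ^ (j - j0) * (2 ^ j0 * |t|) := by gcongr
      _ = _ := by rw [← mul_assoc, ← pow_add, Nat.sub_add_cancel hj]
  · have h := hm (j0 - 1) (by omega)
    rw [not_le] at h
    rw [ha, le_inv_comm₀ (by positivity) (by positivity), ← one_div, le_div_iff₀ (by positivity)]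
    calc _ = 2 ^ (j0 - 1 - j + j) * |t| := by rw [pow_add]; ring
      _ ≤ 1 := by rw [Nat.sub_add_cancel (by omega)]; exact h.le

/-- Powers of the inverse weights are summable along dyadic scales, uniformly. -/
lemma rho_sum (κ : ℝ) (hκ : 0 < κ) : ∃ K : ℝ≥0∞, K ≠ ∞ ∧ ∀ t : ℝ, t ≠ 0 →
    ∑' j : ℕ, (rho (2 ^ j * t))⁻¹ ^ κ ≤ K := by
  set Z : ℝ≥0∞ := ∑' n, tw (-(1 / 2) * κ) n with hZ
  have hZt : Z ≠ ∞ := tsum_tw_ne_top (by nlinarith)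
  refine ⟨Z + Z, ENNReal.add_ne_top.2 ⟨hZt, hZt⟩, fun t ht => ?_⟩
  obtain ⟨j0, h1, h2⟩ := exists_scale ht
  have hne : ∀ j : ℕ, (2 : ℝ) ^ j * t ≠ 0 := fun j => mul_ne_zero (by positivity) ht
  rw [← Summable.sum_add_tsum_nat_add' (f := fun j : ℕ => (rho (2 ^ j * t))⁻¹ ^ κ) (k := j0)
    ENNReal.summable]
  refine add_le_add ?_ ?_
  · rw [← Finset.sum_range_reflect]
    have h3 : ∀ k ∈ Finset.range j0, (rho (2 ^ (j0 - 1 - k) * t))⁻¹ ^ κ ≤ tw (-(1 / 2) * κ) k := by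
      intro k hk
      have hk := Finset.mem_range.1 hk
      rw [← tw_rpow]
      refine ENNReal.rpow_le_rpow (rho_inv_le (hne _) (Or.inr ?_)) hκ.le
      have := h2 (j0 - 1 - k) (by omega)
      rwa [show j0 - 1 - (j0 - 1 - k) = k by omega] at this
    exact (Finset.sum_le_sum h3).trans (ENNReal.sum_le_tsum _)
  · refine ENNReal.tsum_le_tsum fun k => ?_
    rw [← tw_rpow]
    refine ENNReal.rpow_le_rpow (rho_inv_le (hne _) (Or.inl ?_)) hκ.le
    have := h1 (k + j0) (by omega)
    rwa [Nat.add_sub_cancel] at this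

end

/-! ### The Besov estimate -/

section

set_option linter.unusedSectionVars false
open scoped SchwartzMap

/-- Fubini for the splitting `ℝ^{m+1} = ℝ^m × ℝ`. -/
lemma lintegral_snoc {m : ℕ} (f : Eu (m + 1) → ℝ≥0∞) (hf : Measurable f) :
    ∫⁻ x, f x = ∫⁻ t : ℝ, ∫⁻ x' : Eu m, f (Fin.snoc x' t) := by
  have h := volume_preserving_piFinSuccAbove (fun _ : Fin (m + 1) => ℝ) (Fin.last m)
  have h2 := h.symm
  rw [← h2.lintegral_comp hf]
  have hm : Measurable fun w : ℝ × Eu m =>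
      f ((MeasurableEquiv.piFinSuccAbove (fun _ : Fin (m + 1) => ℝ) (Fin.last m)).symm w) :=
    hf.comp (MeasurableEquiv.measurable _)
  refine (lintegral_prod _ hm.aemeasurable).trans ?_
  congr 1
  ext t
  congr 1
  ext x'
  congr 1
  exact Fin.insertNth_last' (n := m) t x'

lemma measurable_snoc (m : ℕ) : Measurable fun w : ℝ × Eu m => (Fin.snoc w.2 w.1 : Eu (m + 1)) := by
  refine measurable_pi_lambda _ fun i => ?_
  refine Fin.lastCases ?_ (fun i => ?_) i
  · simpa using measurable_fst
  · simp only [Fin.snoc_castSucc]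
    fun_prop

lemma abs_rpow_integrableOn : IntegrableOn (fun u : ℝ => |u| ^ (-(1 / 2) : ℝ)) (Set.Ioc (-1) 1) := by
  have h1 : IntervalIntegrable (fun u : ℝ => |u| ^ (-(1 / 2) : ℝ)) volume 0 1 := by
    refine (intervalIntegral.intervalIntegrable_rpow' (r := (-(1 / 2) : ℝ)) (by norm_num)).congr ?_
    intro u hu
    rw [Set.uIoc_of_le zero_le_one] at hu
    simp only [abs_of_pos hu.1]
  have h2 : IntervalIntegrable (fun u : ℝ => |u| ^ (-(1 / 2) : ℝ)) volume (-1) 0 := by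
    rw [IntervalIntegrable.iff_comp_neg]
    simpa using h1.symm
  exact (intervalIntegrable_iff_integrableOn_Ioc_of_le (by norm_num)).1 (h2.trans h1)

/-- Integrability of the half-power weight against the decay of the kernel in the normal
direction. -/
lemma rho_lintegral (B : ℝ) (hB : 2 ≤ B) :
    ∫⁻ u : ℝ, rho u * ENNReal.ofReal ((1 + ‖u‖) ^ (-B)) ≠ ∞ := by
  have hle : ∀ u : ℝ, rho u * ENNReal.ofReal ((1 + ‖u‖) ^ (-B)) ≤
      ENNReal.ofReal ((1 + ‖u‖) ^ (-(3 / 2) : ℝ)) +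
        ((Set.Ioc (-1) 1).indicator (fun u : ℝ => ENNReal.ofReal (|u| ^ (-(1 / 2) : ℝ))) u +
          ENNReal.ofReal ((1 + ‖u‖) ^ (-2 : ℝ))) := by
    intro u
    have hu0 : 0 ≤ |u| := abs_nonneg u
    rw [Real.norm_eq_abs]
    unfold rho
    rw [add_mul]
    refine add_le_add ?_ ?_
    · rw [← ENNReal.ofReal_mul (by positivity)]
      refine ENNReal.ofReal_le_ofReal ?_
      calc |u| ^ (1 / 2 : ℝ) * (1 + |u|) ^ (-B)
          ≤ (1 + |u|) ^ (1 / 2 : ℝ) * (1 + |u|) ^ (-2 : ℝ) := by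
            gcongr
            · linarith
            · linarith
        _ = _ := by rw [← Real.rpow_add (by positivity)]; norm_num
    · by_cases hu : u ∈ Set.Ioc (-1 : ℝ) 1
      · rw [Set.indicator_of_mem hu]
        refine le_trans (mul_le_of_le_one_right' ?_) le_self_add
        rw [ENNReal.ofReal_le_one]
        exact Real.rpow_le_one_of_one_le_of_nonpos (by linarith) (by linarith)
      · rw [Set.indicator_of_notMem hu, zero_add]
        have hu1 : 1 ≤ |u| := by
          by_contra! hc
          rw [abs_lt] at hc
          exact hu ⟨hc.1, hc.2.le⟩
        refine (mul_le_of_le_one_left' ?_).trans ?_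
        · rw [ENNReal.ofReal_le_one]
          exact Real.rpow_le_one_of_one_le_of_nonpos hu1 (by norm_num)
        · refine ENNReal.ofReal_le_ofReal ?_
          gcongr
          linarith
  refine ne_top_of_le_ne_top ?_ (lintegral_mono hle)
  rw [lintegral_add_left (by fun_prop), lintegral_add_right _ (by fun_prop),
    lintegral_indicator measurableSet_Ioc]
  refine ENNReal.add_ne_top.2 ⟨?_, ENNReal.add_ne_top.2 ⟨?_, ?_⟩⟩
  · exact (finite_integral_one_add_norm (E := ℝ) (by simp; norm_num)).ne
  · refine ne_top_of_le_ne_top abs_rpow_integrableOn.2.ne (lintegral_mono fun u => ?_)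
    exact Real.ofReal_le_enorm _
  · exact (finite_integral_one_add_norm (E := ℝ) (by simp)).ne

lemma rho_wgt_lintegral (M : ℕ) (r : ℝ) (hr : 0 < r) (hM : 2 ≤ M * r) :
    ∃ A : ℝ≥0∞, A ≠ ∞ ∧ ∀ j, ∫⁻ t : ℝ, rho (2 ^ j * t) * wgt 1 M j t ^ r = A * tw (r - 1) j := by
  refine ⟨_, rho_lintegral (M * r) hM, fun j => ?_⟩
  have h1 : ∀ t : ℝ, rho (2 ^ j * t) * wgt 1 M j t ^ r = Pw 1 j ^ r *
      (rho ((2 : ℝ) ^ j • t) * ENNReal.ofReal ((1 + ‖(2 : ℝ) ^ j • t‖) ^ (-(M * r)))) := by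
    intro v
    unfold wgt
    rw [ENNReal.mul_rpow_of_nonneg _ _ hr.le, ENNReal.ofReal_rpow_of_nonneg (x := (_ : ℝ)⁻¹)
      (by positivity) hr.le, norm_smul, Real.norm_of_nonneg (by positivity : (0 : ℝ) ≤ 2 ^ j),
      smul_eq_mul, mul_left_comm]
    congr 3
    rw [Real.rpow_neg (by positivity), Real.inv_rpow (by positivity), ← Real.rpow_natCast,
      ← Real.rpow_mul (by positivity)]
  simp_rw [h1]
  have hmr := measurable_rho
  rw [lintegral_const_mul _ (by fun_prop), lintegral_comp_two_pow j
    (fun v : ℝ => rho v * ENNReal.ofReal ((1 + ‖v‖) ^ (-(M * r)))) (by fun_prop),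
    Module.finrank_self, Pw_eq_tw, tw_inv, tw_rpow, ← mul_assoc, tw_mul, mul_comm]
  congr 2
  push_cast
  ring

lemma enorm_sum_rpow_le {ι : Type} (S : Finset ι) (f : ι → ℂ) (p : ℝ) (hp : 0 < p) (hp1 : p ≤ 1) :
    ‖∑ k ∈ S, f k‖ₑ ^ p ≤ ∑ k ∈ S, ‖f k‖ₑ ^ p := by
  classical
  induction S using Finset.induction_on with
  | empty => simp [hp]
  | insert a S ha ih =>
    rw [Finset.sum_insert ha, Finset.sum_insert ha]
    calc _ ≤ (‖f a‖ₑ + ‖∑ k ∈ S, f k‖ₑ) ^ p := by gcongr; exact enorm_add_le _ _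
      _ ≤ ‖f a‖ₑ ^ p + ‖∑ k ∈ S, f k‖ₑ ^ p := ENNReal.rpow_add_le_add_rpow _ _ hp.le hp1
      _ ≤ _ := by gcongr

/-- The `min(p,1)`-triangle inequality in `L_p`. -/
lemma eLpNorm_sum_rpow_le {m : ℕ} (p : ℝ≥0∞) (hp : 0 < p) : ∃ r : ℝ, 0 < r ∧
    ∀ (S : Finset ℕ) (f : ℕ → Eu m → ℂ), (∀ k, Continuous (f k)) →
      eLpNorm (fun x => ∑ k ∈ S, f k x) p volume ^ r ≤ ∑ k ∈ S, eLpNorm (f k) p volume ^ r := by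
  rcases le_total 1 p with h1 | h1
  · refine ⟨1, one_pos, fun S f hf => ?_⟩
    simp only [ENNReal.rpow_one]
    have := eLpNorm_sum_le (μ := (volume : Measure (Eu m))) (s := S) (f := f) (p := p)
      (fun k _ => (hf k).aestronglyMeasurable) h1
    convert this using 2
    ext x
    simp
  · have hpt : p ≠ ∞ := ne_top_of_le_ne_top ENNReal.one_ne_top h1
    have hp0 : 0 < p.toReal := ENNReal.toReal_pos hp.ne' hpt
    have hp1 : p.toReal ≤ 1 := by
      have := ENNReal.toReal_mono ENNReal.one_ne_top h1
      simpa using this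
    have e : ∀ g : Eu m → ℂ, eLpNorm g p volume ^ p.toReal = ∫⁻ x, ‖g x‖ₑ ^ p.toReal := by
      intro g
      rw [eLpNorm_eq_lintegral_rpow_enorm_toReal hp.ne' hpt, ← ENNReal.rpow_mul,
        one_div_mul_cancel hp0.ne', ENNReal.rpow_one]
    refine ⟨p.toReal, hp0, fun S f hf => ?_⟩
    simp_rw [e]
    rw [← lintegral_finsetSum S (fun k _ => by have := hf k; fun_prop)]
    exact lintegral_mono fun x => enorm_sum_rpow_le S (fun k => f k x) _ hp0 hp1

variable {Ψ : ℝ → ℝ} {m : ℕ} {Φn : ℕ → 𝓢(Eu (m + 1), ℂ)} {Φm : ℕ → 𝓢(Eu m, ℂ)}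

lemma LPfun_continuous (Φ : 𝓢(Eu m, ℂ)) (u : TD m) : Continuous (LPfun Φ u) := by
  rw [LPfun_eq]; exact TD_kt_continuous u _

/-- The low-frequency parts of `f` in terms of its Besov norm. -/
lemma lowP_besov (hΦm : IsLP Ψ Φm) (σ : ℝ) (hσ : σ < 0) (p q : ℝ≥0∞) (hp : 0 < p) (hq : 0 < q) :
    ∃ C : ℝ≥0∞, C ≠ ∞ ∧ ∀ f : TD m,
      ellqNorm q (fun j => tw σ j * eLpNorm (lowP Φm f j) p volume) ≤
        C * besovNormD Φm σ p q f := by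
  obtain ⟨r, hr, h1⟩ := eLpNorm_sum_rpow_le (m := m) p hp
  obtain ⟨C, hC, h2⟩ := hardy σ r hσ hr q hq
  refine ⟨C, hC, fun f => h2 _ _ fun j => ?_⟩
  have := h1 (Finset.range (j + 2)) (fun k => LPfun (Φm k) f) (fun k => LPfun_continuous _ _)
  simp_rw [← lowP_eq_sum hΦm] at this
  exact this

lemma ellqNorm_mono (q : ℝ≥0∞) (a b : ℕ → ℝ≥0∞) (h : ∀ j, a j ≤ b j) :
    ellqNorm q a ≤ ellqNorm q b := by
  unfold ellqNorm
  split_ifs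
  · exact iSup_mono h
  · refine ENNReal.rpow_le_rpow (ENNReal.tsum_le_tsum fun j => ?_) (by positivity)
    exact ENNReal.rpow_le_rpow (h j) (by positivity)

lemma ellqNorm_const_mul (q : ℝ≥0∞) (hq : 0 < q) (c : ℝ≥0∞) (a : ℕ → ℝ≥0∞) :
    ellqNorm q (fun j => c * a j) = c * ellqNorm q a := by
  unfold ellqNorm
  split_ifs with h
  · rw [ENNReal.mul_iSup]
  · have hq0 : 0 < q.toReal := ENNReal.toReal_pos hq.ne' h
    simp_rw [ENNReal.mul_rpow_of_nonneg _ _ hq0.le]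
    rw [ENNReal.tsum_mul_left, ENNReal.mul_rpow_of_nonneg _ _ (by positivity), ← ENNReal.rpow_mul,
      mul_one_div_cancel hq0.ne', ENNReal.rpow_one]

/-- The distribution `f ⊗ δ₀`. -/
def tens (f : TD m) : TD (m + 1) := f ∘L restrS m

lemma LPfun_tens (Φ : 𝓢(Eu (m + 1), ℂ)) (f : TD m) (x : Eu (m + 1)) :
    LPfun Φ (tens f) x = f (slK Φ x) := by
  rw [LPfun_eq]; rfl

lemma exists_M (m : ℕ) (r : ℝ) (hr : 0 < r) :
    ∃ M : ℕ, (m : ℝ) < M ∧ (m : ℝ) < M * r ∧ 2 ≤ M * r := by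
  obtain ⟨M, hM⟩ := exists_nat_gt ((m : ℝ) + (m + 2) / r)
  have h0 : 0 < (m + 2 : ℝ) / r := by positivity
  have h1 : (m + 2 : ℝ) / r < M := by
    have : (0 : ℝ) ≤ m := by positivity
    linarith
  rw [div_lt_iff₀ hr] at h1
  refine ⟨M, by linarith, ?_, ?_⟩
  · linarith
  · have : (0 : ℝ) ≤ m := by positivity
    linarith

lemma rpow_eLpNorm {d : ℕ} (p : ℝ≥0∞) (hp : 0 < p) (hpt : p ≠ ∞) (g : Eu d → ℂ) :
    eLpNorm g p volume ^ p.toReal = ∫⁻ x, ‖g x‖ₑ ^ p.toReal := by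
  have hp0 : 0 < p.toReal := ENNReal.toReal_pos hp.ne' hpt
  rw [eLpNorm_eq_lintegral_rpow_enorm_toReal hp.ne' hpt, ← ENNReal.rpow_mul,
    one_div_mul_cancel hp0.ne', ENNReal.rpow_one]

/-- The `L_p`-norm of a single Littlewood–Paley piece of `f ⊗ δ₀`. -/
lemma piece_Lp (hΨ : GoodPsi Ψ) (hΦn : IsLP Ψ Φn) (hΦm : IsLP Ψ Φm) (p : ℝ≥0∞) (hp : 0 < p) :
    ∃ C : ℝ≥0∞, C ≠ ∞ ∧ ∀ (f : TD m) (j : ℕ), eLpNorm (LPfun (Φn j) (tens f)) p volume ≤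
      C * (tw (1 - iv p) j * eLpNorm (lowP Φm f j) p volume) := by
  by_cases hpt : p = ∞
  · subst hpt
    obtain ⟨C, hC, h⟩ := slice_top hΨ hΦn hΦm
    refine ⟨C, hC, fun f j => ?_⟩
    rw [eLpNorm_exponent_top, eLpNormEssSup]
    refine essSup_le_of_ae_le _ (Eventually.of_forall fun x => ?_)
    simp only
    rw [LPfun_tens]
    refine (h f j x).trans (le_of_eq ?_)
    simp [iv, Pw_eq_tw, mul_assoc]
  · have hp0 : 0 < p.toReal := ENNReal.toReal_pos hp.ne' hpt
    set P := p.toReal with hP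
    obtain ⟨M, hM1, hM2, hM3⟩ := exists_M m P hp0
    obtain ⟨C, hC, h⟩ := slice_lt hΨ hΦn hΦm M P hp0 hM1 hM2
    obtain ⟨A, hA, hAe⟩ := wgt_lintegral (E := ℝ) M P hp0 (by
      rw [Module.finrank_self]; push_cast; linarith)
    rw [Module.finrank_self] at hAe
    refine ⟨(C * A) ^ P⁻¹, ENNReal.rpow_ne_top_of_nonneg (by positivity) (ENNReal.mul_ne_top hC hA),
      fun f j => ?_⟩
    rw [← ENNReal.rpow_le_rpow_iff hp0, rpow_eLpNorm p hp hpt,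
      ENNReal.mul_rpow_of_nonneg _ _ hp0.le, ENNReal.mul_rpow_of_nonneg _ _ hp0.le,
      ENNReal.rpow_inv_rpow hp0.ne', rpow_eLpNorm p hp hpt]
    have hcont := LPfun_continuous (Φn j) (tens f)
    have hwm := measurable_wgt (E := ℝ) 1 M j
    rw [lintegral_snoc _ (by fun_prop)]
    simp_rw [LPfun_tens]
    refine (lintegral_mono fun t => h f j t).trans (le_of_eq ?_)
    rw [lintegral_mul_const _ (by fun_prop), lintegral_const_mul _ (by fun_prop), hAe, Pw_eq_tw,
      tw_rpow, tw_rpow]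
    have e : ((1 : ℕ) : ℝ) * (P - 1) = (1 - iv p) * P := by
      unfold iv
      rw [ENNReal.toReal_inv, ← hP, sub_mul, inv_mul_cancel₀ hp0.ne']
      push_cast; ring
    rw [e]
    ring

/-- The Besov estimate for `f ⊗ δ₀`. -/
lemma besov_tens (hΨ : GoodPsi Ψ) (hΦn : IsLP Ψ Φn) (hΦm : IsLP Ψ Φm) (s : ℝ) (p q : ℝ≥0∞)
    (hp : 0 < p) (hq : 0 < q) (hs : s + 1 - iv p < 0) :
    ∃ C : ℝ≥0∞, C ≠ ∞ ∧ ∀ f : TD m,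
      besovNormD Φn s p q (tens f) ≤ C * besovNormD Φm (s + 1 - iv p) p q f := by
  obtain ⟨C₁, hC₁, h₁⟩ := piece_Lp hΨ hΦn hΦm p hp
  obtain ⟨C₂, hC₂, h₂⟩ := lowP_besov hΦm (s + 1 - iv p) hs p q hp hq
  refine ⟨C₁ * C₂, ENNReal.mul_ne_top hC₁ hC₂, fun f => ?_⟩
  calc besovNormD Φn s p q (tens f)
      ≤ ellqNorm q (fun j => C₁ * (tw (s + 1 - iv p) j * eLpNorm (lowP Φm f j) p volume)) := by
        refine ellqNorm_mono q _ _ fun j => ?_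
        refine (mul_le_mul' le_rfl (h₁ f j)).trans (le_of_eq ?_)
        rw [show s + 1 - iv p = s + (1 - iv p) by ring, ← tw_mul]
        ring
    _ ≤ _ := by
        rw [ellqNorm_const_mul q hq, mul_assoc]
        gcongr
        exact h₂ f

end

/-! ### The Triebel–Lizorkin estimate -/

section

set_option linter.unusedSectionVars false
open scoped SchwartzMap
variable {Ψ : ℝ → ℝ} {m : ℕ} {Φn : ℕ → 𝓢(Eu (m + 1), ℂ)} {Φm : ℕ → 𝓢(Eu m, ℂ)}

/-- A Hölder inequality in `ℓ_q`, weighted by `rho (2^j t)`, that is uniform in `t ≠ 0`. -/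
lemma ellq_le_rho (P : ℝ) (hp0 : 0 < P) (q : ℝ≥0∞) (hq : 0 < q) :
    ∃ K : ℝ≥0∞, K ≠ ∞ ∧ ∀ (t : ℝ), t ≠ 0 → ∀ a : ℕ → ℝ≥0∞,
      ellqNorm q a ^ P ≤ K * ∑' j : ℕ, rho (2 ^ j * t) * a j ^ P := by
  obtain ⟨K₁, hK₁, hk₁⟩ := rho_sum 1 one_pos
  by_cases hqt : q = ∞
  · refine ⟨K₁, hK₁, fun t ht a => ?_⟩
    have hne : ∀ j : ℕ, (2 : ℝ) ^ j * t ≠ 0 := fun j => mul_ne_zero (by positivity) ht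
    refine ellq_le_weighted q hq _ hp0 K₁ _ a (fun j => rho_ne_zero (hne j))
      (fun j => rho_ne_top _) (fun j => ?_) (fun h => absurd hqt h)
    have h3 := ENNReal.le_tsum (f := fun j : ℕ => (rho (2 ^ j * t))⁻¹ ^ (1 : ℝ)) j
    simp only [ENNReal.rpow_one] at h3
    have h4 := hk₁ t ht
    simp only [ENNReal.rpow_one] at h4
    exact h3.trans h4
  · have hq0 : 0 < q.toReal := ENNReal.toReal_pos hq.ne' hqt
    obtain ⟨K₂, hK₂, hk₂⟩ := rho_sum (q.toReal / P) (by positivity)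
    refine ⟨K₁ + K₂ ^ (P / q.toReal), ENNReal.add_ne_top.2 ⟨hK₁,
      ENNReal.rpow_ne_top_of_nonneg (by positivity) hK₂⟩, fun t ht a => ?_⟩
    have hne : ∀ j : ℕ, (2 : ℝ) ^ j * t ≠ 0 := fun j => mul_ne_zero (by positivity) ht
    refine ellq_le_weighted q hq _ hp0 _ _ a (fun j => rho_ne_zero (hne j))
      (fun j => rho_ne_top _) (fun j => ?_) (fun h => ?_)
    · have h3 := ENNReal.le_tsum (f := fun j : ℕ => (rho (2 ^ j * t))⁻¹ ^ (1 : ℝ)) j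
      simp only [ENNReal.rpow_one] at h3
      have h4 := hk₁ t ht
      simp only [ENNReal.rpow_one] at h4
      exact (h3.trans h4).trans le_self_add
    · exact (ENNReal.rpow_le_rpow (hk₂ t ht) (by positivity)).trans le_add_self

/-- Integration of the weighted Hölder inequality over a hyperplane `x_n = t`. -/
lemma slice_ellq (P : ℝ) (q : ℝ≥0∞) (K : ℝ≥0∞) (t : ℝ)
    (hk : ∀ a : ℕ → ℝ≥0∞, ellqNorm q a ^ P ≤ K * ∑' j : ℕ, rho (2 ^ j * t) * a j ^ P)
    (a : ℕ → Eu m → ℝ≥0∞) (ha : ∀ j, Measurable (a j)) :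
    ∫⁻ x', (ellqNorm q fun j => a j x') ^ P ≤
      K * ∑' j : ℕ, rho (2 ^ j * t) * ∫⁻ x', a j x' ^ P := by
  have hm : ∀ j, Measurable fun x' => a j x' ^ P := fun j => (ha j).pow_const _
  calc ∫⁻ x', (ellqNorm q fun j => a j x') ^ P
      ≤ ∫⁻ x', K * ∑' j : ℕ, rho (2 ^ j * t) * a j x' ^ P :=
        lintegral_mono fun x' => hk fun j => a j x'
    _ = _ := by
        rw [lintegral_const_mul _ (Measurable.tsum fun j => (hm j).const_mul _),
          lintegral_tsum fun j => ((hm j).const_mul _).aemeasurable]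
        congr 2
        ext j
        rw [lintegral_const_mul _ (hm j)]

/-- The `F`-estimate follows from the slicewise `L_p`-bounds: the decay in the normal
direction absorbs the weights `rho`, which turns the `ℓ_q`-norm into an `ℓ_p`-norm. -/
lemma tl_abstract (P : ℝ) (hp0 : 0 < P) (q : ℝ≥0∞) (K C₁ A : ℝ≥0∞) (M : ℕ)
    (hk : ∀ (t : ℝ), t ≠ 0 → ∀ a : ℕ → ℝ≥0∞,
      ellqNorm q a ^ P ≤ K * ∑' j : ℕ, rho (2 ^ j * t) * a j ^ P)
    (hA : ∀ j : ℕ, ∫⁻ t : ℝ, rho (2 ^ j * t) * wgt 1 M j t ^ P = A * tw (P - 1) j)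
    (s : ℝ) (L : ℕ → Eu (m + 1) → ℝ≥0∞) (hL : ∀ j, Measurable (L j)) (G : ℕ → ℝ≥0∞)
    (h₁ : ∀ (j : ℕ) (t : ℝ), ∫⁻ x' : Eu m, L j (Fin.snoc x' t) ^ P ≤ C₁ * wgt 1 M j t ^ P * G j) :
    ∫⁻ x, (ellqNorm q fun j => tw s j * L j x) ^ P ≤
      K * (C₁ * A) * ∑' j, tw (s * P + (P - 1)) j * G j := by
  have hmE : Measurable fun x => (ellqNorm q fun j => tw s j * L j x) ^ P := by
    refine Measurable.pow_const ?_ _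
    unfold ellqNorm
    split_ifs
    · exact Measurable.iSup fun j => (hL j).const_mul _
    · exact (Measurable.tsum fun j => ((hL j).const_mul _).pow_const _).pow_const _
  have hsn := measurable_snoc m
  have hmS : ∀ (t : ℝ) (j : ℕ), Measurable fun x' : Eu m => L j (Fin.snoc x' t) := fun t j =>
    ((hL j).comp hsn).comp (measurable_const.prodMk measurable_id : Measurable fun x' : Eu m => (t, x'))
  have hae : ∀ᵐ t : ℝ, t ≠ 0 := by simp [ae_iff]
  have hmt : ∀ j : ℕ, Measurable fun t : ℝ => rho (2 ^ j * t) * wgt 1 M j t ^ P := fun j =>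
    (measurable_rho.comp (measurable_const_mul _)).mul ((measurable_wgt 1 M j).pow_const _)
  have hslice : ∀ t : ℝ, t ≠ 0 →
      ∫⁻ x' : Eu m, (ellqNorm q fun j => tw s j * L j (Fin.snoc x' t)) ^ P ≤
        K * ∑' j : ℕ, (tw s j ^ P * (C₁ * G j)) * (rho (2 ^ j * t) * wgt 1 M j t ^ P) := by
    intro t ht
    refine (slice_ellq P q K t (hk t ht) (fun j x' => tw s j * L j (Fin.snoc x' t))
      (fun j => (hmS t j).const_mul _)).trans ?_
    refine mul_le_mul' le_rfl (ENNReal.tsum_le_tsum fun j => ?_)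
    simp_rw [ENNReal.mul_rpow_of_nonneg _ _ hp0.le]
    rw [lintegral_const_mul _ ((hmS t j).pow_const _)]
    refine (mul_le_mul' le_rfl (mul_le_mul' le_rfl (h₁ j t))).trans (le_of_eq ?_)
    ring
  rw [lintegral_snoc _ hmE]
  refine (lintegral_mono_ae (hae.mono hslice)).trans (le_of_eq ?_)
  rw [lintegral_const_mul _ (Measurable.tsum fun j => (hmt j).const_mul _),
    lintegral_tsum fun j => ((hmt j).const_mul _).aemeasurable, mul_assoc,
    ← ENNReal.tsum_mul_left (a := C₁ * A)]
  congr 1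
  refine tsum_congr fun j => ?_
  rw [lintegral_const_mul _ (hmt j), hA, tw_rpow, ← tw_mul]
  ring

/-- The Triebel–Lizorkin estimate for `f ⊗ δ₀`. -/
lemma tl_tens (hΨ : GoodPsi Ψ) (hΦn : IsLP Ψ Φn) (hΦm : IsLP Ψ Φm) (s : ℝ) (p q : ℝ≥0∞)
    (hp : 0 < p) (hq : 0 < q) (hs : s + 1 - iv p < 0) (hpt : p ≠ ∞) :
    ∃ C : ℝ≥0∞, C ≠ ∞ ∧ ∀ f : TD m,
      tlNormD Φn s p q (tens f) ≤ C * besovNormD Φm (s + 1 - iv p) p p f := by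
  have hp0 : 0 < p.toReal := ENNReal.toReal_pos hp.ne' hpt
  obtain ⟨M, hM1, hM2, hM3⟩ := exists_M m p.toReal hp0
  obtain ⟨C₁, hC₁, h₁⟩ := slice_lt hΨ hΦn hΦm M p.toReal hp0 hM1 hM2
  obtain ⟨A, hA, hAe⟩ := rho_wgt_lintegral M p.toReal hp0 hM3
  obtain ⟨C₂, hC₂, h₂⟩ := lowP_besov hΦm (s + 1 - iv p) hs p p hp hp
  obtain ⟨K, hK, hk⟩ := ellq_le_rho p.toReal hp0 q hq
  refine ⟨(K * (C₁ * A)) ^ (1 / p.toReal) * C₂, ENNReal.mul_ne_top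
    (ENNReal.rpow_ne_top_of_nonneg (by positivity)
      (ENNReal.mul_ne_top hK (ENNReal.mul_ne_top hC₁ hA))) hC₂, fun f => ?_⟩
  have hmain := tl_abstract p.toReal hp0 q K C₁ A M hk
    hAe
    s (fun j x => ‖LPfun (Φn j) (tens f) x‖ₑ)
    (fun j => (LPfun_continuous (Φn j) (tens f)).measurable.enorm)
    (fun j => ∫⁻ y, ‖lowP Φm f j y‖ₑ ^ p.toReal) (fun j t => by
      simp_rw [LPfun_tens]
      exact h₁ f j t)
  have e : (s + 1 - iv p) * p.toReal = s * p.toReal + (p.toReal - 1) := by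
    unfold iv
    rw [ENNReal.toReal_inv, sub_mul, inv_mul_cancel₀ hp0.ne']
    ring
  have e3 : ellqNorm p (fun j => tw (s + 1 - iv p) j * eLpNorm (lowP Φm f j) p volume) =
      (∑' j, tw (s * p.toReal + (p.toReal - 1)) j *
        ∫⁻ y, ‖lowP Φm f j y‖ₑ ^ p.toReal) ^ (1 / p.toReal) := by
    rw [ellqNorm, if_neg hpt]
    simp_rw [ENNReal.mul_rpow_of_nonneg _ _ hp0.le, tw_rpow, e, rpow_eLpNorm p hp hpt]
  calc tlNormD Φn s p q (tens f) ≤ (K * (C₁ * A) *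
        ∑' j, tw (s * p.toReal + (p.toReal - 1)) j *
          ∫⁻ y, ‖lowP Φm f j y‖ₑ ^ p.toReal) ^ (1 / p.toReal) :=
        ENNReal.rpow_le_rpow hmain (by positivity)
    _ = (K * (C₁ * A)) ^ (1 / p.toReal) *
        ellqNorm p (fun j => tw (s + 1 - iv p) j * eLpNorm (lowP Φm f j) p volume) := by
        rw [e3, ENNReal.mul_rpow_of_nonneg _ _ (by positivity)]
    _ ≤ _ := by
        rw [mul_assoc]
        exact mul_le_mul' le_rfl (h₂ f)

end

/-! ### The Dirac distribution on `ℝ` -/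

section

set_option linter.unusedSectionVars false
open scoped SchwartzMap

variable {Ψ : ℝ → ℝ} {Φ1 : ℕ → 𝓢(Eu 1, ℂ)}

lemma LPfun_delta (δ : TD 1) (hδ : ∀ φ : 𝓢(Eu 1, ℂ), δ φ = φ 0) (Φ : 𝓢(Eu 1, ℂ)) :
    LPfun Φ δ = fun y => iftS 1 Φ y := by
  rw [LPfun_eq]
  ext y
  rw [hδ, kt_apply, sub_zero]

/-- The kernels `ℱ⁻¹Φ_j` have `L_p`-norm at most a constant times `2^{j(1-1/p)}`, so `δ₀` has
finite norm. -/
lemma delta_ne_top (hΦ1 : IsLP Ψ Φ1) (p : ℝ≥0∞) (hp : 0 < p) (δ : TD 1)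
    (hδ : ∀ φ : 𝓢(Eu 1, ℂ), δ φ = φ 0) : besovNormD Φ1 (iv p - 1) p ∞ δ ≠ ∞ := by
  suffices h : ∃ C : ℝ≥0∞, C ≠ ∞ ∧ ∀ j, eLpNorm (LPfun (Φ1 j) δ) p volume ≤
      C * tw (1 - iv p) j by
    obtain ⟨C, hC, h⟩ := h
    refine ne_top_of_le_ne_top hC ?_
    unfold besovNormD besovNormSeq ellqNorm
    rw [if_pos rfl]
    refine iSup_le fun j => (mul_le_mul' le_rfl (h j)).trans (le_of_eq ?_)
    rw [mul_left_comm, tw_mul, show iv p - 1 + (1 - iv p) = 0 by ring, tw_zero, mul_one]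
  have hfr : Module.finrank ℝ (Eu 1) = 1 := by simp [Eu]
  have hker : ∀ M : ℕ, ∃ C : ℝ≥0∞, C ≠ ∞ ∧ ∀ j y, ‖iftS 1 (Φ1 j) y‖ₑ ≤ C * wgt 1 M j y := by
    intro M
    obtain ⟨C, hC0, hC⟩ := LPK_bound hΦ1 M
    refine ⟨ENNReal.ofReal C, ENNReal.ofReal_ne_top, fun j y => ?_⟩
    rw [← ofReal_norm, wgt, ← ENNReal.ofReal_mul (by positivity),
      ← ENNReal.ofReal_mul hC0.le]
    exact ENNReal.ofReal_le_ofReal (hC j y)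
  by_cases hpt : p = ∞
  · subst hpt
    obtain ⟨C, hC, h⟩ := hker 0
    refine ⟨C, hC, fun j => ?_⟩
    rw [eLpNorm_exponent_top, eLpNormEssSup, LPfun_delta δ hδ]
    refine essSup_le_of_ae_le _ (Eventually.of_forall fun y => ?_)
    refine (h j y).trans ((mul_le_mul' le_rfl (wgt_le 1 0 j y)).trans (le_of_eq ?_))
    simp [iv, Pw_eq_tw]
  · have hp0 : 0 < p.toReal := ENNReal.toReal_pos hp.ne' hpt
    obtain ⟨M, -, -, hM3⟩ := exists_M 0 p.toReal hp0
    obtain ⟨C, hC, h⟩ := hker M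
    obtain ⟨A, hA, hAe⟩ := wgt_lintegral (E := Eu 1) M p.toReal hp0 (by
      rw [hfr]; push_cast; linarith)
    rw [hfr] at hAe
    refine ⟨C * A ^ p.toReal⁻¹, ENNReal.mul_ne_top hC
      (ENNReal.rpow_ne_top_of_nonneg (by positivity) hA), fun j => ?_⟩
    rw [← ENNReal.rpow_le_rpow_iff hp0, rpow_eLpNorm p hp hpt, LPfun_delta δ hδ,
      ENNReal.mul_rpow_of_nonneg _ _ hp0.le, ENNReal.mul_rpow_of_nonneg _ _ hp0.le,
      ENNReal.rpow_inv_rpow hp0.ne', tw_rpow]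
    calc ∫⁻ y, ‖iftS 1 (Φ1 j) y‖ₑ ^ p.toReal
        ≤ ∫⁻ y : Eu 1, C ^ p.toReal * wgt 1 M j y ^ p.toReal := by
          refine lintegral_mono fun y => ?_
          rw [← ENNReal.mul_rpow_of_nonneg _ _ hp0.le]
          exact ENNReal.rpow_le_rpow (h j y) hp0.le
      _ = _ := by
          have hwm := measurable_wgt (E := Eu 1) 1 M j
          rw [lintegral_const_mul _ (by fun_prop), hAe, Pw_eq_tw, tw_rpow, mul_assoc]
          have e : ((1 : ℕ) : ℝ) * (p.toReal - 1) = (1 - iv p) * p.toReal := by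
            unfold iv
            rw [ENNReal.toReal_inv, sub_mul, inv_mul_cancel₀ hp0.ne']
            push_cast; ring
          rw [e]

/-- `δ₀ ≠ 0` already at frequency zero, as `∫ ℱ⁻¹Φ_0 = Ψ(0) = 1`. -/
lemma delta_ne_zero (hΨ : GoodPsi Ψ) (hΦ1 : IsLP Ψ Φ1) (p : ℝ≥0∞) (hp : 0 < p) (δ : TD 1)
    (hδ : ∀ φ : 𝓢(Eu 1, ℂ), δ φ = φ 0) : besovNormD Φ1 (iv p - 1) p ∞ δ ≠ 0 := by
  intro h0
  unfold besovNormD besovNormSeq ellqNorm at h0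
  rw [if_pos rfl] at h0
  have h1 := (ENNReal.iSup_eq_zero.1 h0 0)
  rw [mul_eq_zero, or_iff_right (tw_ne_zero _ _)] at h1
  simp only at h1
  rw [LPfun_delta δ hδ,
    eLpNorm_eq_zero_iff (iftS 1 (Φ1 0)).continuous.aestronglyMeasurable hp.ne',
    (iftS 1 (Φ1 0)).continuous.ae_eq_iff_eq _ continuous_zero] at h1
  have h2 := pF_iftS (Φ1 0) 0
  rw [h1, hΦ1 0 0] at h2
  simp [pF, LPsym, eun, hΨ.2.1 0 (by norm_num)] at h2

lemma tens_spec {m : ℕ} (f : TD m) (φ : 𝓢(Eu (m + 1), ℂ)) (ψ : 𝓢(Eu m, ℂ))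
    (h : ∀ x' : Eu m, ψ x' = φ (Fin.snoc x' 0)) : tens f φ = f ψ := by
  have : ψ = restrS m φ := by
    ext y
    rw [restrS_apply, h]
  rw [this]
  rfl

end

/-- Tensoring with the Dirac distribution `δ₀`. -/
theorem statement_3 (m : ℕ) (hm : 1 ≤ m) (Ψ : ℝ → ℝ) (hΨ : GoodPsi Ψ)
    (Φn : ℕ → SchwartzMap (Eu (m + 1)) ℂ) (hΦn : IsLP Ψ Φn)
    (Φm : ℕ → SchwartzMap (Eu m) ℂ) (hΦm : IsLP Ψ Φm)
    (Φ1 : ℕ → SchwartzMap (Eu 1) ℂ) (hΦ1 : IsLP Ψ Φ1)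
    (s : ℝ) (p q : ℝ≥0∞) (hp : 0 < p) (hq : 0 < q) (hs : s + 1 - iv p < 0)
    (δ : TD 1) (hδ : ∀ φ : SchwartzMap (Eu 1) ℂ, δ φ = φ 0) :
    besovNormD Φ1 (iv p - 1) p ∞ δ ≠ ∞ ∧
    (∃ c : ℝ≥0∞, c ≠ ∞ ∧ ∀ f : TD m, ∃ F : TD (m + 1),
      (∀ (φ : SchwartzMap (Eu (m + 1)) ℂ) (ψ : SchwartzMap (Eu m) ℂ),
        (∀ x' : Eu m, ψ x' = φ (Fin.snoc x' 0)) → F φ = f ψ) ∧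
      besovNormD Φn s p q F ≤
        c * (besovNormD Φ1 (iv p - 1) p ∞ δ * besovNormD Φm (s + 1 - iv p) p q f)) ∧
    (p ≠ ∞ → ∃ c : ℝ≥0∞, c ≠ ∞ ∧ ∀ f : TD m, ∃ F : TD (m + 1),
      (∀ (φ : SchwartzMap (Eu (m + 1)) ℂ) (ψ : SchwartzMap (Eu m) ℂ),
        (∀ x' : Eu m, ψ x' = φ (Fin.snoc x' 0)) → F φ = f ψ) ∧
      tlNormD Φn s p q F ≤ c * besovNormD Φm (s + 1 - iv p) p p f) := by
  have hd := delta_ne_top hΦ1 p hp δ hδ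
  have hd0 := delta_ne_zero hΨ hΦ1 p hp δ hδ
  refine ⟨hd, ?_, fun hpt => ?_⟩
  · obtain ⟨C, hC, h⟩ := besov_tens hΨ hΦn hΦm s p q hp hq hs
    refine ⟨C * (besovNormD Φ1 (iv p - 1) p ∞ δ)⁻¹,
      ENNReal.mul_ne_top hC (ENNReal.inv_ne_top.2 hd0), fun f => ⟨tens f, tens_spec f, ?_⟩⟩
    refine (h f).trans (le_of_eq ?_)
    rw [mul_assoc, ← mul_assoc _ (besovNormD Φ1 (iv p - 1) p ∞ δ),
      ENNReal.inv_mul_cancel hd0 hd, one_mul]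
  · obtain ⟨C, hC, h⟩ := tl_tens hΨ hΦn hΦm s p q hp hq hs hpt
    exact ⟨C, hC, fun f => ⟨tens f, tens_spec f, h f⟩⟩

end
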